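/- For any real t with t ≥ 1, if x, y > 0 satisfy the concave superadditivity hypothesis at exponent 1/t implicitly, then: for convex bodies K, L in R^m and 0 < t < 1, writing μ = S(L,·) − t·S(K,·) where S(K,·) ≤ S(L,·) as measures, μ is a positive measure with zero barycenter on S^{m−1} which is not concentrated on any great subsphere; hence there is a convex body M with S(M,·) = μ and L = M # (t^{1/(m−1)} K) up to translation. -/

import Mathlib

/-!
Minkowski's existence theorem reduces the decomposition to measures: for `μ = S(L,·) - t S(K,·)`
the barycenter conditions subtract, and an open half-space null for `μ` would have
`S(L,·)`-mass at most `t` times itself, hence be null for `S(L,·)`.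

A measure `σ` satisfying the conditions of Minkowski's theorem is realized by maximizing the volume
of `N ∋ 0` under `∫ h_N ∂σ ≤ 1`. By Blaschke selection there is a maximizer, and by translation
invariance of the constraint it may be taken to contain the origin in its interior. Perturbing the
support function `h` of the maximizer `M` by a continuous `f`, the first variation of the volume is
`dim · ∫ x in M, f (n x) / h (n x)`, where `n x` is the outer normal at the boundary point radially
above `x`. The cone over a small boundary piece with normal `u` has volume proportional to the area
of the piece times `h u`, so `S(M,·)` is a multiple of the image under `n` of `h(n)⁻¹ dx` on `M`,
and the variation is a multiple of `∫ f ∂S(M,·)`. Hence the Euler–Lagrange equation says that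
`S(M,·)` is a multiple of `σ`, and a dilation removes the factor. The same first variation applied
to translations of `M` shows that surface area measures have barycenter the origin.
-/

open MeasureTheory Set
open scoped ENNReal Pointwise RealInnerProductSpace Topology

noncomputable section

abbrev Euc (m : ℕ) : Type := EuclideanSpace ℝ (Fin m)

/-- A convex body: compact convex set with nonempty interior. -/
def IsConvexBody {m : ℕ} (K : Set (Euc m)) : Prop :=
  Convex ℝ K ∧ IsCompact K ∧ (interior K).Nonempty

/-- A (compact convex) polytope: convex hull of a finite set. -/
def IsPolytope {m : ℕ} (P : Set (Euc m)) : Prop :=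
  ∃ s : Finset (Euc m), P = convexHull ℝ (s : Set (Euc m))

def unitSphere (m : ℕ) : Set (Euc m) := Metric.sphere 0 1

/-- `n` is an outward unit normal to `K` at the boundary point `x`. -/
def IsOutwardNormalAt {m : ℕ} (K : Set (Euc m)) (x n : Euc m) : Prop :=
  x ∈ frontier K ∧ ‖n‖ = 1 ∧ ∀ y ∈ K, ⟪y - x, n⟫ ≤ 0

open Classical in
/-- The (set-valued choice of) Gauss map of `K`. -/
def gaussMap {m : ℕ} (K : Set (Euc m)) (x : Euc m) : Euc m :=
  if h : ∃ n, IsOutwardNormalAt K x n then h.choose else 0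

/-- The surface area measure of `K`: the pushforward under the Gauss map of the
`(m-1)`-dimensional Hausdorff measure on the boundary of `K`. -/
def surfMeasure {m : ℕ} (K : Set (Euc m)) : Measure (Euc m) :=
  Measure.map (gaussMap K) (μH[(m : ℝ) - 1].restrict (frontier K))

/-- The face of `P` in direction `n`. -/
def faceIn {m : ℕ} (P : Set (Euc m)) (n : Euc m) : Set (Euc m) :=
  {x ∈ P | ∀ y ∈ P, ⟪y, n⟫ ≤ ⟪x, n⟫}

/-- The `(m-1)`-dimensional volume of the face of `P` in direction `n`. -/
def faceArea {m : ℕ} (P : Set (Euc m)) (n : Euc m) : ℝ≥0∞ :=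
  μH[(m : ℝ) - 1] (faceIn P n)

/-- `n` is the outward unit normal to a facet ((m-1)-dimensional face) of `P`. -/
def IsFacetNormal {m : ℕ} (P : Set (Euc m)) (n : Euc m) : Prop :=
  ‖n‖ = 1 ∧ 0 < faceArea P n

section SupportFunction

variable {E : Type*} [NormedAddCommGroup E] [InnerProductSpace ℝ E] {M : Set E}

/-- The support function `h_M(u) = max_{x ∈ M} ⟪x, u⟫`. It is only meaningful when `M` is nonempty
and bounded. -/
def suppFun (M : Set E) (u : E) : ℝ :=
  sSup ((fun x => ⟪x, u⟫) '' M)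

lemma isGreatest_suppFun (hM : IsCompact M) (hne : M.Nonempty) (u : E) :
    IsGreatest ((fun x => ⟪x, u⟫) '' M) (suppFun M u) :=
  (hM.image (by fun_prop)).isGreatest_sSup (hne.image _)

lemma inner_le_suppFun (hM : IsCompact M) {x : E} (hx : x ∈ M) (u : E) :
    ⟪x, u⟫ ≤ suppFun M u :=
  (isGreatest_suppFun hM ⟨x, hx⟩ u).2 (mem_image_of_mem _ hx)

lemma suppFun_le_iff (hM : IsCompact M) (hne : M.Nonempty) {u : E} {c : ℝ} :
    suppFun M u ≤ c ↔ ∀ x ∈ M, ⟪x, u⟫ ≤ c :=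
  (isLUB_le_iff (isGreatest_suppFun hM hne u).isLUB).trans forall_mem_image

lemma lipschitzWith_suppFun (hM : IsCompact M) (hne : M.Nonempty) {R : NNReal}
    (hR : ∀ x ∈ M, ‖x‖ ≤ R) : LipschitzWith R (suppFun M) := by
  refine LipschitzWith.of_le_add_mul R fun u v => (suppFun_le_iff hM hne).2 fun x hx => ?_
  calc ⟪x, u⟫ = ⟪x, v⟫ + ⟪x, u - v⟫ := by rw [← inner_add_right, add_sub_cancel]
    _ ≤ suppFun M v + R * dist u v := by
        rw [dist_eq_norm]
        gcongr
        · exact inner_le_suppFun hM hx v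
        · exact (real_inner_le_norm _ _).trans (by gcongr; exact hR x hx)

lemma continuous_suppFun (hM : IsCompact M) (hne : M.Nonempty) : Continuous (suppFun M) := by
  obtain ⟨R, hR⟩ := hM.isBounded.exists_norm_le
  exact (lipschitzWith_suppFun hM hne (R := R.toNNReal)
    fun x hx => (hR x hx).trans (Real.le_coe_toNNReal R)).continuous

lemma suppFun_smul_set {c : ℝ} (hc : 0 ≤ c) (M : Set E) (u : E) :
    suppFun (c • M) u = c * suppFun M u := by
  have himage : (fun x => ⟪x, u⟫) '' (c • M) = c • ((fun x => ⟪x, u⟫) '' M) := by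
    simp only [← image_smul, image_image, real_inner_smul_left, smul_eq_mul]
  rw [suppFun, suppFun, himage, Real.sSup_smul_of_nonneg hc, smul_eq_mul]

end SupportFunction

section SupportingHyperplane

variable {E : Type*} [NormedAddCommGroup E] [InnerProductSpace ℝ E] {M : Set E}

lemma exists_mem_sphere_forall_inner_le [CompleteSpace E] (hM : Convex ℝ M)
    (hint : (interior M).Nonempty) {x : E} (hx : x ∉ interior M) :
    ∃ u ∈ Metric.sphere (0 : E) 1, ∀ y ∈ M, ⟪y, u⟫ ≤ ⟪x, u⟫ := by
  obtain ⟨f, hf⟩ := geometric_hahn_banach_open_point hM.interior isOpen_interior hx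
  set w := (InnerProductSpace.toDual ℝ E).symm f
  have hfw (y : E) : f y = ⟪y, w⟫ := by
    rw [real_inner_comm, InnerProductSpace.toDual_symm_apply]
  have hw : w ≠ 0 := by
    obtain ⟨z, hz⟩ := hint
    rintro hw
    simpa [hfw, hw] using hf z hz
  have hle : M ⊆ {y | f y ≤ f x} :=
    (subset_closure.trans (hM.closure_interior_eq_closure_of_nonempty_interior hint).ge).trans
      (closure_minimal (fun y hy => (hf y hy).le) (isClosed_le (by fun_prop) continuous_const))
  refine ⟨‖w‖⁻¹ • w, ?_, fun y hy => ?_⟩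
  · rw [mem_sphere_zero_iff_norm, norm_smul, norm_inv, norm_norm,
      inv_mul_cancel₀ (norm_ne_zero_iff.2 hw)]
  · rw [inner_smul_right, inner_smul_right, ← hfw, ← hfw]
    exact mul_le_mul_of_nonneg_left (hle hy) (inv_nonneg.2 (norm_nonneg w))

end SupportingHyperplane

section CenteredBody

variable {E : Type*} [NormedAddCommGroup E] [InnerProductSpace ℝ E]

/-- A compact convex set with the origin in its interior, so that `gauge M` is a possibly
asymmetric norm with unit ball `M`. -/
structure IsCenteredBody (M : Set E) : Prop where
  convex : Convex ℝ M
  isCompact : IsCompact M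
  zero_mem_interior : (0 : E) ∈ interior M

namespace IsCenteredBody

variable {M : Set E}

lemma mem_nhds_zero (hM : IsCenteredBody M) : M ∈ 𝓝 (0 : E) :=
  mem_interior_iff_mem_nhds.1 hM.zero_mem_interior

lemma nonempty (hM : IsCenteredBody M) : M.Nonempty :=
  ⟨0, mem_of_mem_nhds hM.mem_nhds_zero⟩

lemma gauge_le_one_iff (hM : IsCenteredBody M) {x : E} : gauge M x ≤ 1 ↔ x ∈ M := by
  rw [gauge_le_one_iff_mem_closure hM.convex hM.mem_nhds_zero, hM.isCompact.isClosed.closure_eq]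

lemma gauge_eq_one_iff (hM : IsCenteredBody M) {x : E} : gauge M x = 1 ↔ x ∈ frontier M :=
  gauge_eq_one_iff_mem_frontier hM.convex hM.mem_nhds_zero

lemma gauge_pos_iff (hM : IsCenteredBody M) {x : E} : 0 < gauge M x ↔ x ≠ 0 :=
  gauge_pos (absorbent_nhds_zero hM.mem_nhds_zero)
    ((NormedSpace.isVonNBounded_iff ℝ).2 hM.isCompact.isBounded)

lemma gauge_inv_smul (hM : IsCenteredBody M) {x : E} (hx : x ≠ 0) :
    gauge M ((gauge M x)⁻¹ • x) = 1 := by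
  rw [gauge_smul_of_nonneg (inv_nonneg.2 (gauge_nonneg x)), smul_eq_mul,
    inv_mul_cancel₀ (hM.gauge_pos_iff.2 hx).ne']

lemma inv_smul_mem_frontier (hM : IsCenteredBody M) {x : E} (hx : x ≠ 0) :
    (gauge M x)⁻¹ • x ∈ frontier M :=
  hM.gauge_eq_one_iff.1 (hM.gauge_inv_smul hx)

lemma continuous_gauge (hM : IsCenteredBody M) : Continuous (gauge M) :=
  _root_.continuous_gauge hM.convex hM.mem_nhds_zero

lemma exists_pos_forall_mem_sphere_le_suppFun (hM : IsCenteredBody M) :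
    ∃ r, 0 < r ∧ ∀ u ∈ Metric.sphere (0 : E) 1, r ≤ suppFun M u := by
  obtain ⟨r, hr, hrM⟩ := Metric.nhds_basis_closedBall.mem_iff.1 hM.mem_nhds_zero
  refine ⟨r, hr, fun u hu => ?_⟩
  have hmem : r • u ∈ M := hrM (by
    rw [mem_closedBall_zero_iff, norm_smul, mem_sphere_zero_iff_norm.1 hu, mul_one,
      Real.norm_of_nonneg hr.le])
  simpa [real_inner_smul_left, mem_sphere_zero_iff_norm.1 hu]
    using inner_le_suppFun hM.isCompact hmem u

lemma suppFun_pos (hM : IsCenteredBody M) {u : E} (hu : u ∈ Metric.sphere (0 : E) 1) :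
    0 < suppFun M u := by
  obtain ⟨r, hr, hle⟩ := hM.exists_pos_forall_mem_sphere_le_suppFun
  exact hr.trans_le (hle u hu)

lemma inner_le_suppFun_mul_gauge (hM : IsCenteredBody M) (x u : E) :
    ⟪x, u⟫ ≤ suppFun M u * gauge M x := by
  rcases eq_or_ne x 0 with rfl | hx
  · simp
  · have h := inner_le_suppFun hM.isCompact (hM.gauge_le_one_iff.1 (hM.gauge_inv_smul hx).le) u
    rwa [real_inner_smul_left, inv_mul_le_iff₀ (hM.gauge_pos_iff.2 hx), mul_comm] at h

lemma exists_inner_eq_suppFun_mul_gauge [CompleteSpace E] [Nontrivial E] (hM : IsCenteredBody M)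
    (x : E) : ∃ u ∈ Metric.sphere (0 : E) 1, ⟪x, u⟫ = suppFun M u * gauge M x := by
  rcases eq_or_ne x 0 with rfl | hx
  · obtain ⟨u, hu⟩ := NormedSpace.sphere_nonempty (x := (0 : E)).2 zero_le_one
    exact ⟨u, hu, by simp⟩
  · obtain ⟨u, hu, hle⟩ := exists_mem_sphere_forall_inner_le hM.convex
      ⟨0, hM.zero_mem_interior⟩ (hM.inv_smul_mem_frontier hx).2
    refine ⟨u, hu, (hM.inner_le_suppFun_mul_gauge x u).antisymm ?_⟩
    have h := (suppFun_le_iff hM.isCompact hM.nonempty).2 hle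
    rwa [real_inner_smul_left, ← div_eq_inv_mul, le_div_iff₀ (hM.gauge_pos_iff.2 hx)] at h

end IsCenteredBody

end CenteredBody

section GaugeDerivative

variable {E : Type*} [NormedAddCommGroup E] [InnerProductSpace ℝ E]

lemma fderiv_gauge_smul (M : Set E) {c : ℝ} (hc : 0 < c) (x : E) :
    fderiv ℝ (gauge M) (c • x) = fderiv ℝ (gauge M) x := by
  have hcomp : (fun y => gauge M (c • y)) = c • gauge M :=
    funext fun y => gauge_smul_of_nonneg hc.le y
  have hderiv : fderiv ℝ (fun y => gauge M (c • y)) x = c • fderiv ℝ (gauge M) (c • x) :=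
    fderiv_comp_smul c
  rw [hcomp, fderiv_const_smul_field] at hderiv
  exact (smul_right_injective _ hc.ne' hderiv).symm

lemma differentiableAt_gauge_smul (M : Set E) {c : ℝ} (hc : 0 < c) {x : E}
    (hx : DifferentiableAt ℝ (gauge M) x) : DifferentiableAt ℝ (gauge M) (c • x) := by
  have hcomp : gauge M = fun y => c • gauge M (c⁻¹ • y) := by
    ext y
    rw [gauge_smul_of_nonneg (inv_nonneg.2 hc.le), smul_inv_smul₀ hc.ne']
  rw [hcomp]
  refine DifferentiableAt.const_smul (DifferentiableAt.comp (g := gauge M) _ ?_ (by fun_prop)) c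
  rwa [inv_smul_smul₀ hc.ne']

lemma IsCenteredBody.ae_differentiableAt_gauge {M : Set E} (hM : IsCenteredBody M)
    [FiniteDimensional ℝ E] [MeasurableSpace E] [BorelSpace E] (μ : Measure E)
    [μ.IsAddHaarMeasure] :
    ∀ᵐ x ∂μ, DifferentiableAt ℝ (gauge M) x := by
  obtain ⟨K, hK⟩ := hM.convex.lipschitz_gauge hM.mem_nhds_zero
  exact hK.ae_differentiableAt

end GaugeDerivative

section GaugeNormal

variable {E : Type*} [NormedAddCommGroup E] [InnerProductSpace ℝ E] [CompleteSpace E]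

/-- The outward unit normal of the level set of `gauge M` through `x`, as the direction of the
gradient. It is only meaningful where `gauge M` is differentiable. -/
def gaugeNormal (M : Set E) (x : E) : E :=
  ‖gradient (gauge M) x‖⁻¹ • gradient (gauge M) x

lemma gradient_gauge_smul (M : Set E) {c : ℝ} (hc : 0 < c) (x : E) :
    gradient (gauge M) (c • x) = gradient (gauge M) x := by
  rw [gradient, gradient, fderiv_gauge_smul M hc]

lemma gaugeNormal_smul (M : Set E) {c : ℝ} (hc : 0 < c) (x : E) :
    gaugeNormal M (c • x) = gaugeNormal M x := by
  rw [gaugeNormal, gaugeNormal, gradient_gauge_smul M hc]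

lemma measurable_gradient_gauge [MeasurableSpace E] [BorelSpace E] (M : Set E) :
    Measurable (gradient (gauge M)) :=
  (InnerProductSpace.toDual ℝ E).symm.continuous.measurable.comp (measurable_fderiv ℝ _)

lemma measurable_gaugeNormal [MeasurableSpace E] [BorelSpace E] [SecondCountableTopology E]
    (M : Set E) : Measurable (gaugeNormal M) :=
  (measurable_gradient_gauge M).norm.inv.smul (measurable_gradient_gauge M)

namespace IsCenteredBody

variable {M : Set E} {x u : E}

lemma gradient_gauge (hM : IsCenteredBody M) (hx : DifferentiableAt ℝ (gauge M) x)
    (hu : u ∈ Metric.sphere (0 : E) 1) (hxu : ⟪x, u⟫ = suppFun M u * gauge M x) :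
    gradient (gauge M) x = (suppFun M u)⁻¹ • u := by
  have hpos := hM.suppFun_pos hu
  have hmin : IsLocalMin (fun y => gauge M y - ⟪(suppFun M u)⁻¹ • u, y⟫) x := by
    refine Filter.Eventually.of_forall fun y => ?_
    simp only [real_inner_smul_left, real_inner_comm _ u, hxu, inv_mul_cancel_left₀ hpos.ne',
      sub_self, sub_nonneg]
    exact (inv_mul_le_iff₀ hpos).2 (hM.inner_le_suppFun_mul_gauge y u)
  have hzero := hmin.hasFDerivAt_eq_zero
    (hx.hasFDerivAt.sub (innerSL ℝ ((suppFun M u)⁻¹ • u)).hasFDerivAt)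
  rw [gradient, sub_eq_zero.1 hzero]
  exact (InnerProductSpace.toDual ℝ E).symm_apply_apply _

lemma gaugeNormal_eq (hM : IsCenteredBody M) (hx : DifferentiableAt ℝ (gauge M) x)
    (hu : u ∈ Metric.sphere (0 : E) 1) (hxu : ⟪x, u⟫ = suppFun M u * gauge M x) :
    gaugeNormal M x = u := by
  have hpos := hM.suppFun_pos hu
  rw [gaugeNormal, hM.gradient_gauge hx hu hxu, norm_smul, mem_sphere_zero_iff_norm.1 hu, mul_one,
    Real.norm_of_nonneg (inv_nonneg.2 hpos.le), smul_smul, inv_inv, mul_inv_cancel₀ hpos.ne',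
    one_smul]

variable [Nontrivial E]

lemma gaugeNormal_mem_sphere (hM : IsCenteredBody M) (hx : DifferentiableAt ℝ (gauge M) x) :
    gaugeNormal M x ∈ Metric.sphere (0 : E) 1 := by
  obtain ⟨u, hu, hxu⟩ := hM.exists_inner_eq_suppFun_mul_gauge x
  rwa [hM.gaugeNormal_eq hx hu hxu]

lemma inner_gaugeNormal (hM : IsCenteredBody M) (hx : DifferentiableAt ℝ (gauge M) x) :
    ⟪x, gaugeNormal M x⟫ = suppFun M (gaugeNormal M x) * gauge M x := by
  obtain ⟨u, hu, hxu⟩ := hM.exists_inner_eq_suppFun_mul_gauge x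
  rwa [hM.gaugeNormal_eq hx hu hxu]

end IsCenteredBody

end GaugeNormal

section PolarCoordinates

lemma ae_toSphere_of_ae {E : Type*} [NormedAddCommGroup E] [NormedSpace ℝ E] [MeasurableSpace E]
    [BorelSpace E] {μ : Measure E} {p : E → Prop} (hmeas : MeasurableSet {x | p x})
    (hsmul : ∀ c : ℝ, 0 < c → ∀ x, p (c • x) → p x) (hp : ∀ᵐ x ∂μ, p x) :
    ∀ᵐ u : Metric.sphere (0 : E) 1 ∂μ.toSphere, p u := by
  have hmeas' : MeasurableSet {u : Metric.sphere (0 : E) 1 | ¬ p u} :=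
    hmeas.compl.preimage measurable_subtype_coe
  rw [ae_iff, Measure.toSphere_apply' _ hmeas']
  refine mul_eq_zero_of_right _ (measure_mono_null ?_ (ae_iff.1 hp))
  rintro _ ⟨c, hc, _, ⟨u, hu, rfl⟩, rfl⟩ hcu
  exact hu (hsmul c hc.1 u hcu)

variable {E : Type*} [NormedAddCommGroup E] [NormedSpace ℝ E] [FiniteDimensional ℝ E]
  [MeasurableSpace E] [BorelSpace E] (μ : Measure E) [μ.IsAddHaarMeasure]

lemma measurePreserving_smul_sphere_prod [Nontrivial E] :
    MeasurePreserving (fun p : Metric.sphere (0 : E) 1 × Ioi (0 : ℝ) => p.2.1 • p.1.1)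
      (μ.toSphere.prod (.volumeIoiPow (Module.finrank ℝ E - 1))) μ := by
  have hpolar := μ.measurePreserving_homeomorphUnitSphereProd.symm
    (e := (homeomorphUnitSphereProd E).toMeasurableEquiv)
  have hval : MeasurePreserving ((↑) : ({0}ᶜ : Set E) → E) (μ.comap (↑)) μ := by
    refine ⟨measurable_subtype_coe, ?_⟩
    rw [map_comap_subtype_coe (measurableSet_singleton _).compl, restrict_compl_singleton]
  exact hval.comp hpolar

lemma volumeIoiPow_real_Iic (n : ℕ) (r : Ioi (0 : ℝ)) :
    (Measure.volumeIoiPow n).real (Iic r) = r.1 ^ (n + 1) / (n + 1) := by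
  have hatom : Measure.volumeIoiPow n {r} = 0 := by
    refine withDensity_absolutelyContinuous _ _ ?_
    rw [(MeasurableEmbedding.subtype_coe measurableSet_Ioi).comap_apply, image_singleton,
      measure_singleton]
  have hr : 0 ≤ r.1 := le_of_lt r.2
  rw [measureReal_def, ← measure_congr (Iio_ae_eq_Iic' hatom), Measure.volumeIoiPow_apply_Iio,
    ENNReal.toReal_ofReal (by positivity)]

variable {μ}

lemma setIntegral_le_one_eq_integral_sphere [Nontrivial E] {g F : E → ℝ} (hg : Measurable g)
    (hghom : ∀ c : ℝ, 0 < c → ∀ x, g (c • x) = c * g x)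
    (hgpos : ∀ u ∈ Metric.sphere (0 : E) 1, 0 < g u)
    (hFhom : ∀ c : ℝ, 0 < c → ∀ x, F (c • x) = F x) (hF : IntegrableOn F {x | g x ≤ 1} μ) :
    ∫ x in {x | g x ≤ 1}, F x ∂μ = (Module.finrank ℝ E : ℝ)⁻¹ *
      ∫ u : Metric.sphere (0 : E) 1, F u * ((g u)⁻¹) ^ Module.finrank ℝ E ∂μ.toSphere := by
  obtain ⟨n, hn⟩ := Nat.exists_eq_succ_of_ne_zero (Module.finrank_pos (R := ℝ) (M := E)).ne'
  have hball : MeasurableSet {x | g x ≤ 1} := measurableSet_le hg measurable_const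
  have hpolar := measurePreserving_smul_sphere_prod μ
  have hFint : Integrable ({x | g x ≤ 1}.indicator F) μ := hF.integrable_indicator hball
  have hslice (u : Metric.sphere (0 : E) 1) :
      ∫ r : Ioi (0 : ℝ), {x | g x ≤ 1}.indicator F (r.1 • u.1)
          ∂(.volumeIoiPow (Module.finrank ℝ E - 1)) =
        (Module.finrank ℝ E : ℝ)⁻¹ * (F u * ((g u)⁻¹) ^ Module.finrank ℝ E) := by
    have hgu := hgpos u u.2
    have hradial : (fun r : Ioi (0 : ℝ) => {x | g x ≤ 1}.indicator F (r.1 • u.1)) =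
        (Iic (⟨(g u)⁻¹, inv_pos.2 hgu⟩ : Ioi (0 : ℝ))).indicator fun _ => F u := by
      ext r
      have hmem : g (r.1 • u.1) ≤ 1 ↔ r ≤ (⟨(g u)⁻¹, inv_pos.2 hgu⟩ : Ioi (0 : ℝ)) := by
        rw [hghom _ r.2, ← le_div_iff₀ hgu, one_div]
        rfl
      simp only [indicator_apply, mem_ofPred_eq, mem_Iic, hmem, hFhom _ r.2]
    rw [hradial, integral_indicator_const _ measurableSet_Iic, hn, Nat.succ_sub_one,
      volumeIoiPow_real_Iic]
    push_cast
    rw [smul_eq_mul, div_eq_inv_mul, Nat.succ_eq_add_one]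
    ring
  calc ∫ x in {x | g x ≤ 1}, F x ∂μ = ∫ x, {x | g x ≤ 1}.indicator F x ∂μ :=
        (integral_indicator hball).symm
    _ = ∫ p, {x | g x ≤ 1}.indicator F (p.2.1 • p.1.1)
          ∂(μ.toSphere.prod (.volumeIoiPow (Module.finrank ℝ E - 1))) := by
        rw [← integral_map (f := {x | g x ≤ 1}.indicator F) hpolar.measurable.aemeasurable
          (hpolar.map_eq.symm ▸ hFint.1), hpolar.map_eq]
    _ = _ := by
        have hint : Integrable (fun p : Metric.sphere (0 : E) 1 × Ioi (0 : ℝ) =>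
            {x | g x ≤ 1}.indicator F (p.2.1 • p.1.1))
              (μ.toSphere.prod (.volumeIoiPow (Module.finrank ℝ E - 1))) :=
          hpolar.integrable_comp_of_integrable hFint
        rw [integral_prod _ hint, ← integral_const_mul]
        simp only [hslice]

end PolarCoordinates

section Danskin

/-- A case of **Danskin's theorem**. -/
lemma hasDerivAt_iSup_add_mul {X : Type*} [TopologicalSpace X] [CompactSpace X] {F G : X → ℝ}
    (hF : Continuous F) (hG : Continuous G) {u₀ : X} (hmax : ∀ u, u ≠ u₀ → F u < F u₀) :
    HasDerivAt (fun s => ⨆ u, (F u + s * G u)) (G u₀) 0 := by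
  have hne : Nonempty X := ⟨u₀⟩
  have hle (u : X) : F u ≤ F u₀ := by
    rcases eq_or_ne u u₀ with rfl | hu
    exacts [le_rfl, (hmax u hu).le]
  have hzero : ⨆ u, (F u + 0 * G u) = F u₀ := by
    simp only [zero_mul, add_zero]
    exact (ciSup_le hle).antisymm (le_ciSup (isCompact_range hF).bddAbove u₀)
  rw [hasDerivAt_iff_isLittleO, Asymptotics.isLittleO_iff]
  intro ε hε
  have hlocal (u : X) :
      ∀ᶠ p : ℝ × X in 𝓝 (0, u), F p.2 + p.1 * (G p.2 - G u₀) ≤ F u₀ + ε * |p.1| := by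
    rcases eq_or_ne u u₀ with rfl | hu
    · have hclose : ∀ᶠ v in 𝓝 u, |G v - G u| < ε := (Metric.continuous_iff'.1 hG) u ε hε
      rw [nhds_prod_eq]
      filter_upwards [hclose.prod_inr (𝓝 (0 : ℝ))] with p hp
      have habs : p.1 * (G p.2 - G u) ≤ |p.1| * ε :=
        (le_abs_self _).trans (by rw [abs_mul]; gcongr)
      linarith [hle p.2]
    · have hcont : Continuous fun p : ℝ × X => F p.2 + p.1 * (G p.2 - G u₀) := by fun_prop
      filter_upwards [hcont.continuousAt.eventually_lt continuousAt_const
        (show F u + 0 * (G u - G u₀) < F u₀ by linarith [hmax u hu])] with p hp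
      linarith [mul_nonneg hε.le (abs_nonneg p.1)]
  have huniform : ∀ᶠ s : ℝ in 𝓝 0, ∀ u ∈ univ, F u + s * (G u - G u₀) ≤ F u₀ + ε * |s| :=
    isCompact_univ.eventually_forall_of_forall_eventually fun u _ => hlocal u
  filter_upwards [huniform] with s hs
  have hlower : F u₀ + s * G u₀ ≤ ⨆ u, (F u + s * G u) :=
    le_ciSup (f := fun u => F u + s * G u) (isCompact_range (by fun_prop)).bddAbove u₀
  have hupper : ⨆ u, (F u + s * G u) ≤ F u₀ + s * G u₀ + ε * |s| :=
    ciSup_le fun u => by linarith [hs u (mem_univ u)]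
  rw [hzero, sub_zero, smul_eq_mul, Real.norm_eq_abs, Real.norm_eq_abs,
    abs_of_nonneg (by linarith)]
  linarith

end Danskin

section WulffShape

variable {E : Type*} [NormedAddCommGroup E] [InnerProductSpace ℝ E] {M : Set E} {f : E → ℝ}

/-- The gauge of `wulffShape M f s`. -/
def wulffGauge (M : Set E) (f : E → ℝ) (s : ℝ) (x : E) : ℝ :=
  ⨆ u : Metric.sphere (0 : E) 1, ⟪x, u⟫ / suppFun M u * (1 - s * (f u / suppFun M u))

/-- The Wulff shape of `h / (1 - s * f / h)`, where `h` is the support function of `M`: a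
perturbation of `M` with support function `h + s * f + O(s ^ 2)`. The reciprocal makes
`wulffGauge M f s` a maximum of affine functions of `s`. -/
def wulffShape (M : Set E) (f : E → ℝ) (s : ℝ) : Set E :=
  {x | wulffGauge M f s x ≤ 1}

lemma wulffGauge_smul (M : Set E) (f : E → ℝ) (s : ℝ) {c : ℝ} (hc : 0 ≤ c) (x : E) :
    wulffGauge M f s (c • x) = c * wulffGauge M f s x := by
  simp only [wulffGauge, real_inner_smul_left, Real.mul_iSup_of_nonneg hc, mul_div_assoc,
    mul_assoc]

lemma zero_mem_wulffShape (M : Set E) (f : E → ℝ) (s : ℝ) : 0 ∈ wulffShape M f s := by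
  have hzero : wulffGauge M f s 0 = 0 := by
    simpa only [zero_smul, zero_mul] using wulffGauge_smul M f s le_rfl 0
  exact hzero.trans_le zero_le_one

namespace IsCenteredBody

lemma continuous_div_suppFun (hM : IsCenteredBody M) (hf : Continuous f) :
    Continuous fun u : Metric.sphere (0 : E) 1 => f u / suppFun M u :=
  (hf.comp continuous_subtype_val).div₀
    ((continuous_suppFun hM.isCompact hM.nonempty).comp continuous_subtype_val)
    fun u => (hM.suppFun_pos u.2).ne'

variable [FiniteDimensional ℝ E]

lemma exists_forall_mem_sphere_abs_div_suppFun_le (hM : IsCenteredBody M) (hf : Continuous f) :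
    ∃ B, 0 ≤ B ∧ ∀ u ∈ Metric.sphere (0 : E) 1, |f u / suppFun M u| ≤ B := by
  obtain ⟨B, hB⟩ := (isCompact_range (hM.continuous_div_suppFun hf)).isBounded.exists_norm_le
  refine ⟨|B|, abs_nonneg B, fun u hu => ?_⟩
  exact (hB _ (mem_range_self (⟨u, hu⟩ : Metric.sphere (0 : E) 1))).trans (le_abs_self B)

lemma exists_pos_forall_mem_sphere_abs_mul_le (hM : IsCenteredBody M) (hf : Continuous f) :
    ∃ δ > 0, ∀ s, |s| ≤ δ → ∀ u ∈ Metric.sphere (0 : E) 1,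
      |s * (f u / suppFun M u)| ≤ 1 / 2 := by
  obtain ⟨B, hB0, hB⟩ := hM.exists_forall_mem_sphere_abs_div_suppFun_le hf
  refine ⟨(2 * (B + 1))⁻¹, by positivity, fun s hs u hu => ?_⟩
  calc |s * (f u / suppFun M u)| = |s| * |f u / suppFun M u| := abs_mul _ _
    _ ≤ (2 * (B + 1))⁻¹ * (B + 1) := by
        gcongr
        exact (hB u hu).trans (by linarith)
    _ = 1 / 2 := by field_simp

lemma continuous_wulffGauge (hM : IsCenteredBody M) (hf : Continuous f) (s : ℝ) :
    Continuous (wulffGauge M f s) := by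
  have hφ := hM.continuous_div_suppFun hf
  have hψ := hM.continuous_div_suppFun (continuous_const (y := (1 : ℝ)))
  have hcont : Continuous fun p : E × Metric.sphere (0 : E) 1 =>
      ⟪p.1, p.2⟫ * (1 / suppFun M p.2) * (1 - s * (f p.2 / suppFun M p.2)) := by
    have h1 := hφ.comp (continuous_snd (X := E))
    have h2 := hψ.comp (continuous_snd (X := E))
    simp only [Function.comp_def] at h1 h2
    fun_prop
  have hsup := (isCompact_univ (X := Metric.sphere (0 : E) 1)).continuous_sSup
    (f := fun x (u : Metric.sphere (0 : E) 1) =>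
      ⟪x, u.1⟫ * (1 / suppFun M u) * (1 - s * (f u / suppFun M u))) hcont
  simpa only [image_univ, sSup_range, mul_one_div] using! hsup

lemma le_wulffGauge (hM : IsCenteredBody M) (hf : Continuous f) (s : ℝ) (x : E) {u : E}
    (hu : u ∈ Metric.sphere (0 : E) 1) :
    ⟪x, u⟫ / suppFun M u * (1 - s * (f u / suppFun M u)) ≤ wulffGauge M f s x := by
  have hφ := hM.continuous_div_suppFun hf
  have hψ := hM.continuous_div_suppFun (f := fun u => ⟪x, u⟫) (by fun_prop)
  exact le_ciSup (f := fun u : Metric.sphere (0 : E) 1 =>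
    ⟪x, u⟫ / suppFun M u * (1 - s * (f u / suppFun M u)))
      (isCompact_range (by fun_prop)).bddAbove ⟨u, hu⟩

lemma suppFun_wulffShape_le (hM : IsCenteredBody M) (hf : Continuous f) {s : ℝ} {u : E}
    (hu : u ∈ Metric.sphere (0 : E) 1) (hs : |s * (f u / suppFun M u)| ≤ 1 / 2)
    (hK : IsCompact (wulffShape M f s)) :
    suppFun (wulffShape M f s) u ≤
      suppFun M u + s * f u + 2 * s ^ 2 * (f u / suppFun M u) ^ 2 * suppFun M u := by
  refine (suppFun_le_iff hK ⟨0, zero_mem_wulffShape M f s⟩).2 fun x hx => ?_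
  have hh := hM.suppFun_pos hu
  have hle := (hM.le_wulffGauge hf s x hu).trans hx
  obtain ⟨hlow, hup⟩ := abs_le.1 hs
  set a := s * (f u / suppFun M u) with ha
  have hinv : 1 ≤ (1 + a + 2 * a ^ 2) * (1 - a) := by
    nlinarith [mul_nonneg (sq_nonneg a) (by linarith : 0 ≤ 1 - 2 * a)]
  have hratio : ⟪x, u⟫ / suppFun M u ≤ 1 + a + 2 * a ^ 2 :=
    le_of_mul_le_mul_right (hle.trans hinv) (by linarith)
  calc ⟪x, u⟫ ≤ (1 + a + 2 * a ^ 2) * suppFun M u := (div_le_iff₀ hh).1 hratio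
    _ = _ := by rw [ha]; field_simp

variable [Nontrivial E]

lemma wulffGauge_le_iff (hM : IsCenteredBody M) (hf : Continuous f) {s : ℝ} {x : E} {c : ℝ} :
    wulffGauge M f s x ≤ c ↔ ∀ u ∈ Metric.sphere (0 : E) 1,
      ⟪x, u⟫ / suppFun M u * (1 - s * (f u / suppFun M u)) ≤ c := by
  have hne : Nonempty (Metric.sphere (0 : E) 1) :=
    (NormedSpace.sphere_nonempty.2 zero_le_one).to_subtype
  exact ⟨fun h u hu => (hM.le_wulffGauge hf s x hu).trans h, fun h => ciSup_le fun u => h u u.2⟩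

lemma gauge_le_two_mul_wulffGauge (hM : IsCenteredBody M) (hf : Continuous f) {s : ℝ}
    (hs : ∀ u ∈ Metric.sphere (0 : E) 1, |s * (f u / suppFun M u)| ≤ 1 / 2) (x : E) :
    gauge M x ≤ 2 * wulffGauge M f s x := by
  obtain ⟨u, hu, hxu⟩ := hM.exists_inner_eq_suppFun_mul_gauge x
  have hle := hM.le_wulffGauge hf s x hu
  rw [hxu, mul_div_cancel_left₀ _ (hM.suppFun_pos hu).ne'] at hle
  nlinarith [le_of_abs_le (hs u hu), gauge_nonneg (s := M) x]

lemma wulffGauge_le_two_mul_gauge (hM : IsCenteredBody M) (hf : Continuous f) {s : ℝ}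
    (hs : ∀ u ∈ Metric.sphere (0 : E) 1, |s * (f u / suppFun M u)| ≤ 1 / 2) (x : E) :
    wulffGauge M f s x ≤ 2 * gauge M x := by
  refine (hM.wulffGauge_le_iff hf).2 fun u hu => ?_
  obtain ⟨hlow, hup⟩ := abs_le.1 (hs u hu)
  have hle : ⟪x, u⟫ / suppFun M u ≤ gauge M x :=
    (div_le_iff₀' (hM.suppFun_pos hu)).2 (hM.inner_le_suppFun_mul_gauge x u)
  nlinarith [gauge_nonneg (s := M) x]

lemma wulffGauge_zero (hM : IsCenteredBody M) (f : E → ℝ) : wulffGauge M f 0 = gauge M := by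
  ext x
  refine (IsGreatest.isLUB ⟨?_, ?_⟩).csSup_eq (range_nonempty_iff_nonempty.2 ?_)
  · obtain ⟨u, hu, hxu⟩ := hM.exists_inner_eq_suppFun_mul_gauge x
    refine ⟨⟨u, hu⟩, ?_⟩
    simp only [hxu, zero_mul, sub_zero, mul_one, mul_div_cancel_left₀ _ (hM.suppFun_pos hu).ne']
  · rintro _ ⟨u, rfl⟩
    simp only [zero_mul, sub_zero, mul_one]
    exact (div_le_iff₀' (hM.suppFun_pos u.2)).2 (hM.inner_le_suppFun_mul_gauge x u)
  · exact (NormedSpace.sphere_nonempty.2 zero_le_one).to_subtype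

lemma wulffShape_zero (hM : IsCenteredBody M) (f : E → ℝ) : wulffShape M f 0 = M := by
  ext x
  rw [wulffShape, mem_ofPred_eq, hM.wulffGauge_zero, hM.gauge_le_one_iff]

lemma isCompact_wulffShape (hM : IsCenteredBody M) (hf : Continuous f) {s : ℝ}
    (hs : ∀ u ∈ Metric.sphere (0 : E) 1, |s * (f u / suppFun M u)| ≤ 1 / 2) :
    IsCompact (wulffShape M f s) := by
  refine (hM.isCompact.smul (2 : ℝ)).of_isClosed_subset
    (isClosed_le (hM.continuous_wulffGauge hf s) continuous_const) fun x hx => ?_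
  refine (mem_smul_set_iff_inv_smul_mem₀ two_ne_zero _ _).2 (hM.gauge_le_one_iff.1 ?_)
  rw [gauge_smul_of_nonneg (by positivity), smul_eq_mul, inv_mul_le_iff₀ two_pos]
  exact (hM.gauge_le_two_mul_wulffGauge hf hs x).trans (by gcongr; exact hx)

/-- Danskin's theorem applies because, where `gauge M` is differentiable, the maximum defining it is
attained only at the normal. -/
lemma hasDerivAt_wulffGauge (hM : IsCenteredBody M) (hf : Continuous f) {x : E}
    (hx : DifferentiableAt ℝ (gauge M) x) :
    HasDerivAt (fun s => wulffGauge M f s x)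
      (-(gauge M x * (f (gaugeNormal M x) / suppFun M (gaugeNormal M x)))) 0 := by
  set u₀ : Metric.sphere (0 : E) 1 := ⟨gaugeNormal M x, hM.gaugeNormal_mem_sphere hx⟩
  have hF := hM.continuous_div_suppFun (f := fun u => ⟪x, u⟫) (by fun_prop)
  have hG : Continuous fun u : Metric.sphere (0 : E) 1 =>
      -(⟪x, u⟫ / suppFun M u * (f u / suppFun M u)) :=
    (hF.mul (hM.continuous_div_suppFun hf)).neg
  have hF0 : ⟪x, u₀⟫ / suppFun M u₀ = gauge M x := by
    rw [hM.inner_gaugeNormal hx, mul_div_cancel_left₀ _ (hM.suppFun_pos u₀.2).ne']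
  have hmax (u : Metric.sphere (0 : E) 1) (hu : u ≠ u₀) :
      ⟪x, u⟫ / suppFun M u < ⟪x, u₀⟫ / suppFun M u₀ := by
    rw [hF0, div_lt_iff₀' (hM.suppFun_pos u.2)]
    refine (hM.inner_le_suppFun_mul_gauge x u).lt_of_ne fun heq => hu (Subtype.ext ?_)
    exact (hM.gaugeNormal_eq hx u.2 heq).symm
  have hderiv := hasDerivAt_iSup_add_mul hF hG hmax
  rw [hF0] at hderiv
  refine hderiv.congr_of_eventuallyEq (Filter.Eventually.of_forall fun s => ?_)
  exact iSup_congr fun u => by ring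

lemma hasDerivAt_inv_wulffGauge_pow (hM : IsCenteredBody M) (hf : Continuous f) {x : E}
    (hx0 : x ≠ 0) (hx : DifferentiableAt ℝ (gauge M) x) (n : ℕ) :
    HasDerivAt (fun s => (wulffGauge M f s x)⁻¹ ^ n)
      (n * (f (gaugeNormal M x) / suppFun M (gaugeNormal M x) * (gauge M x)⁻¹ ^ n)) 0 := by
  have hpos := hM.gauge_pos_iff.2 hx0
  have hinv := (hM.hasDerivAt_wulffGauge hf hx).fun_inv (by rw [hM.wulffGauge_zero]; exact hpos.ne')
  refine (hinv.fun_pow n).congr_deriv ?_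
  rw [hM.wulffGauge_zero]
  cases n with
  | zero => simp
  | succ k =>
    rw [Nat.add_sub_cancel, pow_succ (gauge M x)⁻¹]
    field_simp

lemma exists_forall_abs_sub_wulffGauge_le (hM : IsCenteredBody M) (hf : Continuous f) :
    ∃ L : ℝ, ∀ x s t, |wulffGauge M f s x - wulffGauge M f t x| ≤ L * ‖x‖ * |s - t| := by
  obtain ⟨r, hr, hrle⟩ := hM.exists_pos_forall_mem_sphere_le_suppFun
  obtain ⟨B, hB0, hB⟩ := hM.exists_forall_mem_sphere_abs_div_suppFun_le hf
  have hle (x : E) (s t : ℝ) :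
      wulffGauge M f s x ≤ wulffGauge M f t x + r⁻¹ * B * ‖x‖ * |s - t| := by
    refine (hM.wulffGauge_le_iff hf).2 fun u hu => ?_
    have hinner : |⟪x, u⟫ / suppFun M u| ≤ r⁻¹ * ‖x‖ := by
      rw [abs_div, abs_of_pos (hM.suppFun_pos hu), div_eq_inv_mul]
      gcongr
      · exact hrle u hu
      · simpa [mem_sphere_zero_iff_norm.1 hu] using abs_real_inner_le_norm x u
    calc ⟪x, u⟫ / suppFun M u * (1 - s * (f u / suppFun M u))
        = ⟪x, u⟫ / suppFun M u * (1 - t * (f u / suppFun M u)) +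
          ⟪x, u⟫ / suppFun M u * (f u / suppFun M u) * (t - s) := by ring
      _ ≤ wulffGauge M f t x + r⁻¹ * ‖x‖ * B * |t - s| := by
          refine add_le_add (hM.le_wulffGauge hf t x hu) ((le_abs_self _).trans ?_)
          rw [abs_mul, abs_mul]
          gcongr
          exact hB u hu
      _ = _ := by rw [abs_sub_comm]; ring
  refine ⟨r⁻¹ * B, fun x s t => abs_le.2 ⟨?_, ?_⟩⟩
  · linarith [abs_sub_comm s t ▸ hle x t s]
  · linarith [hle x s t]

lemma exists_pos_forall_mem_sphere_gauge_mem_Icc (hM : IsCenteredBody M) :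
    ∃ a b, 0 < a ∧ ∀ u ∈ Metric.sphere (0 : E) 1, gauge M u ∈ Icc a b := by
  have hcompact := isCompact_sphere (0 : E) 1
  have hne := NormedSpace.sphere_nonempty (x := (0 : E)).2 zero_le_one
  obtain ⟨v, hv, hmin⟩ := hcompact.exists_isMinOn hne hM.continuous_gauge.continuousOn
  obtain ⟨w, -, hmax⟩ := hcompact.exists_isMaxOn hne hM.continuous_gauge.continuousOn
  exact ⟨_, _, hM.gauge_pos_iff.2 (ne_zero_of_mem_unit_sphere ⟨v, hv⟩),
    fun u hu => ⟨hmin hu, hmax hu⟩⟩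

lemma exists_lipschitzOnWith_inv_wulffGauge_pow (hM : IsCenteredBody M) (hf : Continuous f)
    {δ : ℝ} (hδ : ∀ s, |s| ≤ δ → ∀ u ∈ Metric.sphere (0 : E) 1,
      |s * (f u / suppFun M u)| ≤ 1 / 2) (n : ℕ) :
    ∃ K, ∀ u ∈ Metric.sphere (0 : E) 1,
      LipschitzOnWith K (fun s => (wulffGauge M f s u)⁻¹ ^ n) (Metric.closedBall 0 δ) := by
  obtain ⟨a, b, ha, hab⟩ := hM.exists_pos_forall_mem_sphere_gauge_mem_Icc
  obtain ⟨L, hL⟩ := hM.exists_forall_abs_sub_wulffGauge_le hf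
  have hsmooth : ContDiffOn ℝ 1 (fun r : ℝ => r⁻¹ ^ n) (Icc (a / 2) (2 * b)) :=
    (contDiffOn_id.inv fun r hr => ((half_pos ha).trans_le hr.1).ne').pow n
  obtain ⟨K, hK⟩ := hsmooth.exists_lipschitzOnWith one_ne_zero (convex_Icc _ _) isCompact_Icc
  refine ⟨K * L.toNNReal, fun u hu => hK.comp (f := fun s => wulffGauge M f s u) ?_ ?_⟩
  · refine LipschitzOnWith.of_dist_le_mul fun s _ t _ => (hL u s t).trans ?_
    rw [mem_sphere_zero_iff_norm.1 hu, mul_one, Real.dist_eq]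
    gcongr
    exact Real.le_coe_toNNReal L
  · intro s hs
    have hsmall := hδ s (mem_closedBall_zero_iff.1 hs)
    have hlow := hM.gauge_le_two_mul_wulffGauge hf hsmall u
    have hup := hM.wulffGauge_le_two_mul_gauge hf hsmall u
    constructor <;> linarith [(hab u hu).1, (hab u hu).2]

end IsCenteredBody

end WulffShape

section FirstVariation

variable {E : Type*} [NormedAddCommGroup E] [InnerProductSpace ℝ E] [FiniteDimensional ℝ E]
  [MeasurableSpace E] [BorelSpace E] {M : Set E} {f : E → ℝ}

namespace IsCenteredBody

lemma ae_differentiableAt_gauge_toSphere (hM : IsCenteredBody M) (μ : Measure E)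
    [μ.IsAddHaarMeasure] :
    ∀ᵐ u : Metric.sphere (0 : E) 1 ∂μ.toSphere, DifferentiableAt ℝ (gauge M) (u : E) := by
  refine ae_toSphere_of_ae (measurableSet_of_differentiableAt ℝ (gauge M)) (fun c hc x hx => ?_)
    (hM.ae_differentiableAt_gauge μ)
  simpa only [inv_smul_smul₀ hc.ne'] using differentiableAt_gauge_smul M (inv_pos.2 hc) hx

lemma measurable_comp_gaugeNormal_div (hM : IsCenteredBody M) (hf : Continuous f) :
    Measurable fun x => f (gaugeNormal M x) / suppFun M (gaugeNormal M x) :=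
  (hf.measurable.div (continuous_suppFun hM.isCompact hM.nonempty).measurable).comp
    (measurable_gaugeNormal M)

variable [Nontrivial E]

lemma measureReal_wulffShape (hM : IsCenteredBody M) (hf : Continuous f) {s : ℝ}
    (hs : ∀ u ∈ Metric.sphere (0 : E) 1, |s * (f u / suppFun M u)| ≤ 1 / 2) (μ : Measure E)
    [μ.IsAddHaarMeasure] :
    μ.real (wulffShape M f s) = (Module.finrank ℝ E : ℝ)⁻¹ *
      ∫ u : Metric.sphere (0 : E) 1, (wulffGauge M f s u)⁻¹ ^ Module.finrank ℝ E ∂μ.toSphere := by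
  have hpos (u : E) (hu : u ∈ Metric.sphere (0 : E) 1) : 0 < wulffGauge M f s u := by
    have hgauge := hM.gauge_pos_iff.2 (ne_zero_of_mem_unit_sphere ⟨u, hu⟩)
    linarith [hM.gauge_le_two_mul_wulffGauge hf hs u]
  have hball : IntegrableOn (fun _ => (1 : ℝ)) {x | wulffGauge M f s x ≤ 1} μ :=
    integrableOn_const (hM.isCompact_wulffShape hf hs).measure_lt_top.ne
  have hpolar := setIntegral_le_one_eq_integral_sphere (F := fun _ => 1)
    (hM.continuous_wulffGauge hf s).measurable
    (fun c hc x => wulffGauge_smul M f s hc.le x) hpos (fun _ _ _ => rfl) hball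
  simpa only [setIntegral_const, smul_eq_mul, mul_one, one_mul] using! hpolar

lemma setIntegral_comp_gaugeNormal (hM : IsCenteredBody M) (hf : Continuous f) (μ : Measure E)
    [μ.IsAddHaarMeasure] :
    ∫ x in M, f (gaugeNormal M x) / suppFun M (gaugeNormal M x) ∂μ =
      (Module.finrank ℝ E : ℝ)⁻¹ * ∫ u : Metric.sphere (0 : E) 1,
        f (gaugeNormal M u) / suppFun M (gaugeNormal M u) *
          (gauge M u)⁻¹ ^ Module.finrank ℝ E ∂μ.toSphere := by
  have hball : {x | gauge M x ≤ 1} = M := ext fun x => hM.gauge_le_one_iff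
  obtain ⟨B, -, hB⟩ := hM.exists_forall_mem_sphere_abs_div_suppFun_le hf
  have hint : IntegrableOn (fun x => f (gaugeNormal M x) / suppFun M (gaugeNormal M x)) M μ := by
    refine .of_bound hM.isCompact.measure_lt_top
      (hM.measurable_comp_gaugeNormal_div hf).aestronglyMeasurable B ?_
    filter_upwards [ae_restrict_of_ae (hM.ae_differentiableAt_gauge μ)] with x hx
    exact hB _ (hM.gaugeNormal_mem_sphere hx)
  have hpolar := setIntegral_le_one_eq_integral_sphere (μ := μ)
    (F := fun x => f (gaugeNormal M x) / suppFun M (gaugeNormal M x))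
    hM.continuous_gauge.measurable
    (fun c hc x => gauge_smul_of_nonneg hc.le x)
    (fun u hu => hM.gauge_pos_iff.2 (ne_zero_of_mem_unit_sphere ⟨u, hu⟩))
    (fun c hc x => by simp only [gaugeNormal_smul M hc]) (hball.symm ▸ hint)
  rwa [hball] at hpolar

lemma hasDerivAt_measureReal_wulffShape (hM : IsCenteredBody M) (hf : Continuous f)
    (μ : Measure E) [μ.IsAddHaarMeasure] :
    HasDerivAt (fun s => μ.real (wulffShape M f s))
      (Module.finrank ℝ E * ∫ x in M, f (gaugeNormal M x) / suppFun M (gaugeNormal M x) ∂μ) 0 := by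
  set n := Module.finrank ℝ E with hn
  obtain ⟨δ, hδ, hsmall⟩ := hM.exists_pos_forall_mem_sphere_abs_mul_le hf
  obtain ⟨K, hK⟩ := hM.exists_lipschitzOnWith_inv_wulffGauge_pow hf hsmall n
  have hnhds : Metric.closedBall (0 : ℝ) δ ∈ 𝓝 0 := Metric.closedBall_mem_nhds _ hδ
  set F : ℝ → Metric.sphere (0 : E) 1 → ℝ := fun s u => (wulffGauge M f s u)⁻¹ ^ n
  have hmeas (s : ℝ) : AEStronglyMeasurable (F s) μ.toSphere :=
    (((hM.continuous_wulffGauge hf s).measurable.comp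
      measurable_subtype_coe).inv.pow_const n).aestronglyMeasurable
  have hint : Integrable (F 0) μ.toSphere := by
    simp only [F, hM.wulffGauge_zero]
    have hcont := ((hM.continuous_gauge.comp continuous_subtype_val).inv₀ fun u =>
      (hM.gauge_pos_iff.2 (ne_zero_of_mem_unit_sphere u)).ne').pow n
    exact hcont.integrable_of_hasCompactSupport (HasCompactSupport.of_compactSpace _)
  have hderiv : ∀ᵐ u : Metric.sphere (0 : E) 1 ∂μ.toSphere, HasDerivAt (F · u)
      (n * (f (gaugeNormal M u) / suppFun M (gaugeNormal M u) * (gauge M u)⁻¹ ^ n)) 0 := by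
    filter_upwards [hM.ae_differentiableAt_gauge_toSphere μ] with u hu
    exact hM.hasDerivAt_inv_wulffGauge_pow hf (ne_zero_of_mem_unit_sphere u) hu n
  have hderiv_meas : Measurable fun u : Metric.sphere (0 : E) 1 =>
      n * (f (gaugeNormal M u) / suppFun M (gaugeNormal M u) * (gauge M u)⁻¹ ^ n) := by
    have := (hM.measurable_comp_gaugeNormal_div hf).comp
      (measurable_subtype_coe (p := (· ∈ Metric.sphere (0 : E) 1)))
    have := hM.continuous_gauge.measurable
    simp only [Function.comp_def] at *
    fun_prop
  have hvol := (hasDerivAt_integral_of_dominated_loc_of_lip hnhds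
    (Filter.Eventually.of_forall hmeas) hint hderiv_meas.aestronglyMeasurable
    (Filter.Eventually.of_forall fun u => by
      rw [Real.nnabs_coe]
      exact hK u u.2)
    (integrable_const (K : ℝ)) hderiv).2.const_mul (n : ℝ)⁻¹
  rw [hM.setIntegral_comp_gaugeNormal hf μ, ← integral_const_mul, ← hn]
  refine HasDerivAt.congr_deriv (hvol.congr_of_eventuallyEq ?_) ?_
  · filter_upwards [hnhds] with s hs
    exact hM.measureReal_wulffShape hf (hsmall s (mem_closedBall_zero_iff.1 hs)) μ
  · rw [integral_const_mul, integral_const_mul]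
    ring

end IsCenteredBody

end FirstVariation

/-- `a` and `b` coincide up to a factor `C` in either direction. -/
def AgreeUpTo (C a b : ℝ≥0∞) : Prop := a ≤ C * b ∧ b ≤ C * a

namespace AgreeUpTo

variable {C D a b c : ℝ≥0∞}

lemma symm (h : AgreeUpTo C a b) : AgreeUpTo C b a := ⟨h.2, h.1⟩

lemma trans (hab : AgreeUpTo C a b) (hbc : AgreeUpTo D b c) : AgreeUpTo (C * D) a c :=
  ⟨hab.1.trans ((mul_le_mul_right hbc.1 C).trans_eq (mul_assoc _ _ _).symm),
    hbc.2.trans ((mul_le_mul_right hab.2 D).trans_eq (by ring))⟩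

lemma mul_left (c : ℝ≥0∞) (h : AgreeUpTo C a b) : AgreeUpTo C (c * a) (c * b) :=
  ⟨(mul_le_mul_right h.1 c).trans_eq (mul_left_comm _ _ _),
    (mul_le_mul_right h.2 c).trans_eq (mul_left_comm _ _ _)⟩

lemma of_mul_left (hc : c ≠ 0) (hc' : c ≠ ∞) (h : AgreeUpTo C (c * a) (c * b)) :
    AgreeUpTo C a b := by
  simpa only [AgreeUpTo, mul_left_comm C c, ENNReal.mul_le_mul_iff_right hc hc'] using h

end AgreeUpTo

section BiLipschitz

variable {ι X Y : Type*} [MetricSpace X] [MeasurableSpace X] [BorelSpace X]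
  [MetricSpace Y] [MeasurableSpace Y] [BorelSpace Y]

lemma hausdorffMeasure_image_le_of_dist_le {T : Set ι} {α : ι → X} {β : ι → Y} {K : NNReal}
    (h : ∀ p ∈ T, ∀ p' ∈ T, dist (α p) (α p') ≤ K * dist (β p) (β p')) {s : ℝ} (hs : 0 ≤ s) :
    μH[s] (α '' T) ≤ (K : ℝ≥0∞) ^ s * μH[s] (β '' T) := by
  rcases T.eq_empty_or_nonempty with rfl | ⟨p₀, -⟩
  · simp
  have : Nonempty ι := ⟨p₀⟩
  have hinv : ∀ p ∈ T, Function.invFunOn β T (β p) ∈ T ∧ β (Function.invFunOn β T (β p)) = β p :=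
    fun p hp => ⟨Function.invFunOn_mem ⟨p, hp, rfl⟩, Function.invFunOn_eq ⟨p, hp, rfl⟩⟩
  have hlip : LipschitzOnWith K (fun y => α (Function.invFunOn β T y)) (β '' T) := by
    refine LipschitzOnWith.of_dist_le_mul ?_
    rintro _ ⟨p, hp, rfl⟩ _ ⟨p', hp', rfl⟩
    simpa only [hinv p hp, hinv p' hp'] using h _ (hinv p hp).1 _ (hinv p' hp').1
  refine le_trans (measure_mono ?_) (hlip.hausdorffMeasure_image_le hs)
  rintro _ ⟨p, hp, rfl⟩
  refine ⟨β p, mem_image_of_mem _ hp, dist_le_zero.1 ?_⟩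
  simpa only [hinv p hp, dist_self, mul_zero] using h _ (hinv p hp).1 p hp

lemma agreeUpTo_hausdorffMeasure_image {T : Set ι} {α : ι → X} {β : ι → Y} {K : NNReal}
    (hαβ : ∀ p ∈ T, ∀ p' ∈ T, dist (α p) (α p') ≤ K * dist (β p) (β p'))
    (hβα : ∀ p ∈ T, ∀ p' ∈ T, dist (β p) (β p') ≤ K * dist (α p) (α p')) (n : ℕ) :
    AgreeUpTo (K ^ n) (μH[n] (α '' T)) (μH[n] (β '' T)) := by
  rw [← ENNReal.rpow_natCast]
  exact ⟨hausdorffMeasure_image_le_of_dist_le hαβ n.cast_nonneg,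
    hausdorffMeasure_image_le_of_dist_le hβα n.cast_nonneg⟩

end BiLipschitz

lemma norm_le_mul_norm_of_norm_sub_le {E : Type*} [NormedAddCommGroup E] {a b : E} {K : ℝ}
    (hK : 1 ≤ K) (h : ‖a - b‖ ≤ (1 - K⁻¹) * ‖b‖) : ‖a‖ ≤ K * ‖b‖ ∧ ‖b‖ ≤ K * ‖a‖ := by
  have hK0 : 0 < K := one_pos.trans_le hK
  have hKK : 2 - K⁻¹ ≤ K := by
    have : K * K⁻¹ = 1 := mul_inv_cancel₀ hK0.ne'
    nlinarith [mul_nonneg (sub_nonneg.2 hK) (sub_nonneg.2 (inv_le_one_of_one_le₀ hK))]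
  have ha : ‖a‖ - ‖b‖ ≤ ‖a - b‖ := norm_sub_norm_le a b
  have hb : ‖b‖ - ‖a‖ ≤ ‖a - b‖ := norm_sub_rev a b ▸ norm_sub_norm_le b a
  refine ⟨?_, (inv_mul_le_iff₀ hK0).1 (by linarith)⟩
  calc ‖a‖ ≤ (2 - K⁻¹) * ‖b‖ := by linarith
    _ ≤ K * ‖b‖ := by gcongr

/-- The density of the `d`-dimensional Hausdorff measure with respect to Lebesgue measure on
`ℝ^d`; it is not `1` in general because Mathlib's Hausdorff measure is not normalised. -/
def hausdorffDensity (d : ℕ) : NNReal :=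
  Measure.addHaarScalarFactor (μH[d] : Measure (Euc d)) volume

section HausdorffDensity

variable (d : ℕ)

instance isAddHaarMeasure_hausdorffMeasure_euc :
    (μH[d] : Measure (Euc d)).IsAddHaarMeasure := by
  simpa only [finrank_euclideanSpace_fin] using isAddHaarMeasure_hausdorffMeasure (E := Euc d)

lemma hausdorffDensity_pos : 0 < hausdorffDensity d :=
  Measure.addHaarScalarFactor_pos_of_isAddHaarMeasure _ _

lemma hausdorffMeasure_eq_hausdorffDensity_mul (s : Set (Euc d)) :
    μH[d] s = hausdorffDensity d * volume s := by
  conv_lhs => rw [Measure.isAddLeftInvariant_eq_smul (μH[d] : Measure (Euc d)) volume]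
  rfl

variable {d}

lemma agreeUpTo_volume_image {ι : Type*} {T : Set ι} {α β : ι → Euc d} {K : NNReal}
    (hαβ : ∀ p ∈ T, ∀ p' ∈ T, dist (α p) (α p') ≤ K * dist (β p) (β p'))
    (hβα : ∀ p ∈ T, ∀ p' ∈ T, dist (β p) (β p') ≤ K * dist (α p) (α p')) :
    AgreeUpTo (K ^ d) (volume (α '' T)) (volume (β '' T)) := by
  refine AgreeUpTo.of_mul_left (ENNReal.coe_ne_zero.2 (hausdorffDensity_pos d).ne')
    ENNReal.coe_ne_top ?_
  simpa only [hausdorffMeasure_eq_hausdorffDensity_mul] using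
    agreeUpTo_hausdorffMeasure_image hαβ hβα d

end HausdorffDensity

section Prism

variable {d : ℕ}

lemma exists_orthogonal_coordinates {u : Euc (d + 1)} (hu : ‖u‖ = 1) :
    ∃ P : Euc (d + 1) →ₗ[ℝ] Euc d, (∀ x, ‖P x‖ ^ 2 + ⟪x, u⟫ ^ 2 = ‖x‖ ^ 2) ∧
      MeasurePreserving (fun x => (⟪x, u⟫, P x)) volume (volume.prod volume) := by
  have : Fact (Module.finrank ℝ (Euc (d + 1)) = d + 1) := ⟨finrank_euclideanSpace_fin⟩
  have hu0 : u ≠ 0 := norm_ne_zero_iff.1 (hu ▸ one_ne_zero)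
  let e : Euc (d + 1) ≃ₗᵢ[ℝ] WithLp 2 (ℝ × Euc d) :=
    (ℝ ∙ u).orthogonalDecomposition.trans (LinearIsometryEquiv.withLpProdCongr 2
      (LinearIsometryEquiv.toSpanUnitSingleton u hu).symm
      (OrthonormalBasis.fromOrthogonalSpanSingleton d hu0).repr)
  have he (x : Euc (d + 1)) : (e x).fst = ⟪x, u⟫ := by
    rw [real_inner_comm]
    have h : LinearIsometryEquiv.toSpanUnitSingleton (𝕜 := ℝ) u hu ⟪u, x⟫ =
        (ℝ ∙ u).orthogonalProjectionOnto x :=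
      Subtype.ext (Submodule.starProjection_unit_singleton ℝ hu x).symm
    simp [e, LinearIsometryEquiv.symm_apply_eq, ← h]
  refine ⟨WithLp.sndₗ 2 ℝ ℝ (Euc d) ∘ₗ e.toLinearMap, fun x => ?_, ?_⟩
  · rw [← he, ← e.norm_map x, WithLp.prod_norm_sq_eq_of_L2, Real.norm_eq_abs, sq_abs, add_comm]
    rfl
  · simp only [← he]
    exact (WithLp.volume_preserving_ofLp ℝ (Euc d)).comp e.measurePreserving

lemma volume_image_prism {u x₀ : Euc (d + 1)} (hu : ‖u‖ = 1) (hx₀ : 0 < ⟪x₀, u⟫)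
    {P : Euc (d + 1) →ₗ[ℝ] Euc d} (hP : ∀ x, ‖P x‖ ^ 2 + ⟪x, u⟫ ^ 2 = ‖x‖ ^ 2)
    (hPvol : MeasurePreserving (fun x => (⟪x, u⟫, P x)) volume (volume.prod volume))
    (X : Set (Euc (d + 1))) (I : Set ℝ) :
    volume ((fun p : Euc (d + 1) × ℝ => p.1 - ⟪p.1, u⟫ • u + p.2 • x₀) '' (X ×ˢ I)) =
      ENNReal.ofReal ⟪x₀, u⟫ * volume I * volume (P '' X) := by
  set a := ⟪x₀, u⟫
  have hPu : P u = 0 := by simpa [hu] using hP u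
  let shear : ℝ × Euc d → ℝ × Euc d := fun p => (p.1, p.2 - (p.1 / a) • P x₀)
  let Φ : Euc (d + 1) → ℝ × Euc d := fun x => shear (⟪x, u⟫, P x)
  have hshear : MeasurePreserving shear (volume.prod volume) (volume.prod volume) :=
    (MeasurePreserving.id volume).skew_product (g := fun τ w => w - (τ / a) • P x₀)
      (Continuous.measurable (by fun_prop))
      (.of_forall fun τ => (measurePreserving_sub_right volume _).map_eq)
  have hΦ_inj : Function.Injective Φ := fun x y hxy => by
    simp only [Φ, shear, Prod.mk.injEq] at hxy
    have h0 : ⟪x - y, u⟫ = 0 := by rw [inner_sub_left, hxy.1, sub_self]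
    have h1 : P (x - y) = 0 := by simpa [hxy.1, sub_eq_zero] using hxy.2
    simpa [h0, h1, sub_eq_zero] using (hP (x - y)).symm
  have hΦ_emb : MeasurableEmbedding Φ := by
    have hPc : Continuous P := P.continuous_of_finiteDimensional
    exact Continuous.measurableEmbedding (by fun_prop) hΦ_inj
  have hΦ_prism (p : Euc (d + 1) × ℝ) :
      Φ (p.1 - ⟪p.1, u⟫ • u + p.2 • x₀) = (p.2 * a, P p.1) := by
    have hτ : ⟪p.1 - ⟪p.1, u⟫ • u + p.2 • x₀, u⟫ = p.2 * a := by
      simp only [inner_add_left, inner_sub_left, real_inner_smul_left, real_inner_self_eq_norm_sq,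
        hu]
      ring
    simp only [Φ, shear, hτ, map_add, map_sub, map_smul, hPu, smul_zero, sub_zero,
      mul_div_cancel_right₀ _ hx₀.ne', add_sub_cancel_right]
  have himage : Φ '' ((fun p : Euc (d + 1) × ℝ => p.1 - ⟪p.1, u⟫ • u + p.2 • x₀) '' (X ×ˢ I)) =
      (a • I) ×ˢ (P '' X) := by
    simp only [image_image, hΦ_prism]
    rw [← image_smul, prod_image_image_eq, ← image_swap_prod, image_image]
    simp only [smul_eq_mul, mul_comm, Prod.swap]
  rw [← hΦ_inj.preimage_image (_ '' _), himage]
  calc volume (Φ ⁻¹' (a • I) ×ˢ (P '' X)) = volume.prod volume ((a • I) ×ˢ (P '' X)) :=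
        (hshear.comp hPvol).measure_preimage_emb hΦ_emb _
    _ = ENNReal.ofReal a * volume I * volume (P '' X) := by
        rw [Measure.prod_prod, Measure.addHaar_smul]
        simp [abs_of_pos hx₀]

end Prism

section Shell

/-- The map `(x, s) ↦ s • x` is close to the prism map `(x, s) ↦ x - ⟪x, u⟫ u + s x₀` on sets of
points `x` near `x₀` with almost horizontal chords. -/
lemma norm_smul_sub_smul_sub_le {E : Type*} [NormedAddCommGroup E] [InnerProductSpace ℝ E]
    {u x₀ x x' : E} {s s' r R δ : ℝ} (hu : ‖u‖ = 1) (hr : 0 < r) (hx₀ : ‖x₀‖ ≤ R)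
    (hrx₀ : r ≤ ⟪x₀, u⟫) (hδ : δ ≤ 1 / 2) (hx' : ‖x' - x₀‖ ≤ δ)
    (hxx' : |⟪x - x', u⟫| ≤ δ * ‖x - x'‖) (hs : |s - 1| ≤ δ) :
    ‖(s • x - s' • x') - ((x - ⟪x, u⟫ • u + s • x₀) - (x' - ⟪x', u⟫ • u + s' • x₀))‖ ≤
      δ * (4 * (1 + R / r) + 1 / r) *
        ‖(x - ⟪x, u⟫ • u + s • x₀) - (x' - ⟪x', u⟫ • u + s' • x₀)‖ := by
  set D := (x - ⟪x, u⟫ • u + s • x₀) - (x' - ⟪x', u⟫ • u + s' • x₀) with hD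
  have hδ0 : 0 ≤ δ := (norm_nonneg _).trans hx'
  have hs_sub : |s - s'| ≤ ‖D‖ / r := by
    have hDu : ⟪D, u⟫ = (s - s') * ⟪x₀, u⟫ := by
      simp only [hD, inner_add_left, inner_sub_left, real_inner_smul_left,
        real_inner_self_eq_norm_sq, hu]
      ring
    have h := abs_real_inner_le_norm D u
    rw [hu, mul_one, hDu, abs_mul, abs_of_pos (hr.trans_le hrx₀)] at h
    rw [le_div_iff₀ hr]
    exact (mul_le_mul_of_nonneg_left hrx₀ (abs_nonneg _)).trans h
  have hxx'_le : ‖x - x'‖ ≤ 2 * ((1 + R / r) * ‖D‖) := by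
    have h : x - x' = D - (s - s') • x₀ + ⟪x - x', u⟫ • u := by
      rw [hD, inner_sub_left]; module
    have h' : ‖x - x'‖ ≤ ‖D‖ + (‖D‖ / r) * R + δ * ‖x - x'‖ := by
      calc ‖x - x'‖ ≤ ‖D‖ + ‖(s - s') • x₀‖ + ‖⟪x - x', u⟫ • u‖ := by
            nth_rw 1 [h]
            exact (norm_add_le _ _).trans (by gcongr; exact norm_sub_le _ _)
        _ ≤ ‖D‖ + (‖D‖ / r) * R + δ * ‖x - x'‖ := by
            rw [norm_smul, norm_smul, hu, mul_one, Real.norm_eq_abs, Real.norm_eq_abs]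
            gcongr
    have h'' : (1 + R / r) * ‖D‖ = ‖D‖ + (‖D‖ / r) * R := by ring
    nlinarith [norm_nonneg (x - x')]
  calc ‖(s • x - s' • x') - D‖
      = ‖(s - 1) • (x - x') + ⟪x - x', u⟫ • u + (s - s') • (x' - x₀)‖ := by
        rw [hD, inner_sub_left]; congr 1; module
    _ ≤ |s - 1| * ‖x - x'‖ + |⟪x - x', u⟫| + |s - s'| * ‖x' - x₀‖ := by
        refine norm_add₃_le.trans_eq ?_
        simp only [norm_smul, hu, mul_one, Real.norm_eq_abs]
    _ ≤ δ * ‖x - x'‖ + δ * ‖x - x'‖ + ‖D‖ / r * δ := by gcongr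
    _ ≤ δ * (2 * ((1 + R / r) * ‖D‖)) + δ * (2 * ((1 + R / r) * ‖D‖)) + ‖D‖ / r * δ := by
        gcongr
    _ = δ * (4 * (1 + R / r) + 1 / r) * ‖D‖ := by ring

variable {d : ℕ}

lemma norm_le_mul_norm_of_sq_add_inner_sq {E F : Type*} [NormedAddCommGroup E]
    [InnerProductSpace ℝ E] [NormedAddCommGroup F] {u x : E} {w : F} {K : ℝ} (hK : 1 ≤ K)
    (hw : ‖w‖ ^ 2 + ⟪x, u⟫ ^ 2 = ‖x‖ ^ 2) (hx : |⟪x, u⟫| ≤ (1 - K⁻¹) * ‖x‖) :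
    ‖x‖ ≤ K * ‖w‖ := by
  have h : ‖x‖ ≤ ‖w‖ + |⟪x, u⟫| := by
    refine le_of_sq_le_sq ?_ (by positivity)
    nlinarith [sq_abs ⟪x, u⟫, mul_nonneg (norm_nonneg w) (abs_nonneg ⟪x, u⟫)]
  exact (inv_mul_le_iff₀ (one_pos.trans_le hK)).1 (by linarith)

lemma agreeUpTo_hausdorffMeasure_projection {K : NNReal} (hK : 1 < K) {u : Euc (d + 1)}
    {P : Euc (d + 1) →ₗ[ℝ] Euc d} (hP : ∀ x, ‖P x‖ ^ 2 + ⟪x, u⟫ ^ 2 = ‖x‖ ^ 2)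
    {X : Set (Euc (d + 1))}
    (hX : ∀ x ∈ X, ∀ x' ∈ X, |⟪x - x', u⟫| ≤ (1 - (K : ℝ)⁻¹) * ‖x - x'‖) :
    AgreeUpTo (K ^ d) (hausdorffDensity d * volume (P '' X)) (μH[d] X) := by
  have hK1 : (1 : ℝ) ≤ K := by exact_mod_cast hK.le
  have h : AgreeUpTo (K ^ d) (μH[d] (P '' X)) (μH[d] (id '' X)) := by
    refine agreeUpTo_hausdorffMeasure_image (fun x _ x' _ => ?_) (fun x hx x' hx' => ?_) d
    · simp only [id, dist_eq_norm, ← map_sub]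
      refine le_trans (le_of_sq_le_sq ?_ (norm_nonneg _))
        (le_mul_of_one_le_left (norm_nonneg (x - x')) hK1)
      linarith [hP (x - x'), sq_nonneg ⟪x - x', u⟫]
    · simp only [id, dist_eq_norm, ← map_sub]
      exact norm_le_mul_norm_of_sq_add_inner_sq hK1 (hP _) (hX x hx x' hx')
  rwa [image_id, hausdorffMeasure_eq_hausdorffDensity_mul] at h

lemma exists_shell_agreeUpTo (d : ℕ) {K : NNReal} (hK : 1 < K) {r R : ℝ} (hr : 0 < r)
    (hR : 0 < R) :
    ∃ δ : ℝ, 0 < δ ∧ ∀ {u x₀ : Euc (d + 1)} {X : Set (Euc (d + 1))} {η : ℝ},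
      ‖u‖ = 1 → ‖x₀‖ ≤ R → r ≤ ⟪x₀, u⟫ → (∀ x ∈ X, ‖x - x₀‖ ≤ δ) →
      (∀ x ∈ X, ∀ x' ∈ X, |⟪x - x', u⟫| ≤ δ * ‖x - x'‖) → η ≤ δ →
      AgreeUpTo (K ^ (2 * d + 1))
        (hausdorffDensity d *
          volume ((fun p : Euc (d + 1) × ℝ => p.2 • p.1) '' (X ×ˢ Ioc 1 (1 + η))))
        (ENNReal.ofReal ⟪x₀, u⟫ * ENNReal.ofReal η * μH[d] X) := by
  have hK1 : (1 : ℝ) ≤ K := by exact_mod_cast hK.le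
  set θ : ℝ := 1 - (K : ℝ)⁻¹
  have hθ : 0 < θ := sub_pos.2 (inv_lt_one_of_one_lt₀ (by exact_mod_cast hK))
  set B : ℝ := 4 * (1 + R / r) + 1 / r
  have hB : 0 < B := by positivity
  refine ⟨min (1 / 2) (min θ (θ / B)), by positivity, ?_⟩
  intro u x₀ X η hu hx₀ hrx₀ hX hflat hη
  set δ : ℝ := min (1 / 2) (min θ (θ / B))
  have hδθ : δ ≤ θ := (min_le_right _ _).trans (min_le_left _ _)
  have hδB : δ * B ≤ θ := (le_div_iff₀ hB).1 ((min_le_right _ _).trans (min_le_right _ _))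
  obtain ⟨P, hP, hPvol⟩ := exists_orthogonal_coordinates hu
  let α : Euc (d + 1) × ℝ → Euc (d + 1) := fun p => p.2 • p.1
  let β : Euc (d + 1) × ℝ → Euc (d + 1) := fun p => p.1 - ⟪p.1, u⟫ • u + p.2 • x₀
  have hαβ : ∀ p ∈ X ×ˢ Ioc 1 (1 + η), ∀ p' ∈ X ×ˢ Ioc 1 (1 + η),
      ‖α p - α p'‖ ≤ K * ‖β p - β p'‖ ∧ ‖β p - β p'‖ ≤ K * ‖α p - α p'‖ := by
    rintro ⟨x, s⟩ ⟨hx, hs⟩ ⟨x', s'⟩ ⟨hx', -⟩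
    have hs' : |s - 1| ≤ δ := by
      rw [abs_of_pos (sub_pos.2 hs.1)]
      exact (sub_le_iff_le_add'.2 hs.2).trans hη
    exact norm_le_mul_norm_of_norm_sub_le hK1 <|
      (norm_smul_sub_smul_sub_le hu hr hx₀ hrx₀ (min_le_left _ _) (hX x' hx')
        (hflat x hx x' hx') hs').trans (mul_le_mul_of_nonneg_right hδB (norm_nonneg _))
  have hprism : AgreeUpTo (K ^ (d + 1)) (volume (α '' (X ×ˢ Ioc 1 (1 + η))))
      (volume (β '' (X ×ˢ Ioc 1 (1 + η)))) := by
    simp only [← dist_eq_norm] at hαβ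
    exact agreeUpTo_volume_image (fun p hp p' hp' => (hαβ p hp p' hp').1)
      fun p hp p' hp' => (hαβ p hp p' hp').2
  rw [volume_image_prism hu (hr.trans_le hrx₀) hP hPvol, Real.volume_Ioc, add_sub_cancel_left]
    at hprism
  have hproj := agreeUpTo_hausdorffMeasure_projection hK hP fun x hx x' hx' =>
    (hflat x hx x' hx').trans (by gcongr)
  have h := hprism.mul_left (hausdorffDensity d)
  rw [mul_left_comm] at h
  rw [two_mul, add_right_comm, pow_add]
  exact h.trans (hproj.mul_left _)

end Shell

section Comparison

variable {C a b : ℝ≥0∞}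

lemma AgreeUpTo.tsum {ι : Type*} {f g : ι → ℝ≥0∞} (h : ∀ i, AgreeUpTo C (f i) (g i)) :
    AgreeUpTo C (∑' i, f i) (∑' i, g i) := by
  simp only [AgreeUpTo, ← ENNReal.tsum_mul_left]
  exact ⟨ENNReal.tsum_le_tsum fun i => (h i).1, ENNReal.tsum_le_tsum fun i => (h i).2⟩

lemma AgreeUpTo.eq_of_forall_one_lt (n : ℕ)
    (h : ∀ K : NNReal, 1 < K → AgreeUpTo (K ^ n) a b) : a = b := by
  have hlim (c : ℝ≥0∞) :
      Filter.Tendsto (fun K : NNReal => (K : ℝ≥0∞) ^ n * c) (𝓝[>] 1) (𝓝 c) := by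
    have hK : Continuous fun K : NNReal => (K : ℝ≥0∞) ^ n :=
      (ENNReal.continuous_pow n).comp ENNReal.continuous_coe
    simpa using ENNReal.Tendsto.mul_const (hK.continuousWithinAt.tendsto (s := Ioi 1) (x := 1))
      (Or.inl (by simp))
  exact le_antisymm
    (ge_of_tendsto (hlim b) (by filter_upwards [self_mem_nhdsWithin] with K hK using (h K hK).1))
    (ge_of_tendsto (hlim a) (by filter_upwards [self_mem_nhdsWithin] with K hK using (h K hK).2))

variable {α β : Type*} [MeasurableSpace α]

lemma agreeUpTo_setLIntegral {μ : Measure α} {g : α → ℝ≥0∞} {S : Set α} (hS : MeasurableSet S)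
    (hC : C ≠ ∞) (h : ∀ x ∈ S, AgreeUpTo C (g x) a) :
    AgreeUpTo C (∫⁻ x in S, g x ∂μ) (a * μ S) := by
  constructor
  · rw [← mul_assoc, ← setLIntegral_const]
    exact setLIntegral_mono' hS fun x hx => (h x hx).1
  · rw [← setLIntegral_const, ← lintegral_const_mul' _ _ hC]
    exact setLIntegral_mono' hS fun x hx => (h x hx).2

variable [PseudoMetricSpace β] [TopologicalSpace.SeparableSpace β] [MeasurableSpace β]
  [OpensMeasurableSpace β]

lemma measure_eq_zero_of_forall_dist_le {μ : Measure α} {S : Set α} (F : α → β) {δ : ℝ}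
    (hδ : 0 < δ) (h : ∀ X ⊆ S, (∀ x ∈ X, ∀ y ∈ X, dist (F x) (F y) ≤ δ) → μ X = 0) : μ S = 0 := by
  obtain ⟨A, -, hbdd, hdiam, hcover, -⟩ :=
    SeparableSpace.exists_measurable_partition_diam_le (Ω := β) hδ
  rw [← inter_univ S, ← preimage_univ (f := F), ← hcover, preimage_iUnion, inter_iUnion]
  exact measure_iUnion_null fun k => h _ inter_subset_left fun x hx y hy =>
    (Metric.dist_le_diam_of_mem (hbdd k) hx.2 hy.2).trans (hdiam k)

lemma measure_eq_of_forall_agreeUpTo {μ ν : Measure α} {S : Set α} (hS : MeasurableSet S)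
    (hμ : μ Sᶜ = 0) (hν : ν Sᶜ = 0) {F : α → β} (hF : Measurable F) (n : ℕ)
    (h : ∀ K : NNReal, 1 < K → ∃ δ > 0, ∀ X ⊆ S, MeasurableSet X →
      (∀ x ∈ X, ∀ y ∈ X, dist (F x) (F y) ≤ δ) → AgreeUpTo (K ^ n) (μ X) (ν X)) : μ = ν := by
  refine Measure.ext fun T hT => AgreeUpTo.eq_of_forall_one_lt n fun K hK => ?_
  obtain ⟨δ, hδ, hX⟩ := h K hK
  obtain ⟨A, hA, hbdd, hdiam, hcover, hdisj⟩ :=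
    SeparableSpace.exists_measurable_partition_diam_le (Ω := β) hδ
  have hpiece (k : ℕ) : MeasurableSet (T ∩ S ∩ F ⁻¹' A k) := (hT.inter hS).inter (hF (hA k))
  have hsum {m : Measure α} (hm : m Sᶜ = 0) : m T = ∑' k, m (T ∩ S ∩ F ⁻¹' A k) := by
    rw [← measure_iUnion _ hpiece, ← inter_iUnion, ← preimage_iUnion, hcover, preimage_univ,
      inter_univ, measure_inter_conull hm]
    exact fun i j hij => ((hdisj hij).preimage F).mono inter_subset_right inter_subset_right
  rw [hsum hμ, hsum hν]
  exact .tsum fun k => hX _ (inter_subset_left.trans inter_subset_right) (hpiece k)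
    fun x hx y hy => (Metric.dist_le_diam_of_mem (hbdd k) hx.2 hy.2).trans (hdiam k)

end Comparison

lemma exists_forall_dist_le_imp_le_mul {X : Type*} [PseudoMetricSpace X] {S : Set X}
    (hS : IsCompact S) {f : X → ℝ} (hf : ContinuousOn f S) (hpos : ∀ x ∈ S, 0 < f x) {K : ℝ}
    (hK : 1 < K) : ∃ δ > 0, ∀ x ∈ S, ∀ y ∈ S, dist x y ≤ δ → f x ≤ K * f y := by
  rcases S.eq_empty_or_nonempty with rfl | hne
  · exact ⟨1, one_pos, by simp⟩
  obtain ⟨z, hz, hmin⟩ := hS.exists_isMinOn hne hf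
  obtain ⟨δ, hδ, H⟩ := Metric.uniformContinuousOn_iff_le.1
    (hS.uniformContinuousOn_of_continuous hf) ((K - 1) * f z)
    (mul_pos (sub_pos.2 hK) (hpos z hz))
  refine ⟨δ, hδ, fun x hx y hy hxy => ?_⟩
  have hdist := (abs_le.1 (Real.dist_eq _ _ ▸ H x hx y hy hxy)).2
  have hzy : (K - 1) * f z ≤ (K - 1) * f y :=
    mul_le_mul_of_nonneg_left (hmin hy) (sub_pos.2 hK).le
  linarith

lemma exists_agreeUpTo_one_add_pow_sub_one {n : ℕ} (hn : n ≠ 0) {K : NNReal} (hK : 1 < K) {δ : ℝ}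
    (hδ : 0 < δ) : ∃ η > 0, η ≤ δ ∧
      AgreeUpTo K (ENNReal.ofReal ((1 + η) ^ n - 1)) (n * ENNReal.ofReal η) := by
  have hderiv : HasDerivAt (fun x : ℝ => (1 + x) ^ n) n 0 := by
    simpa using ((hasDerivAt_id (0 : ℝ)).const_add 1).fun_pow n
  have hlt : (n : ℝ) < K * n := lt_mul_of_one_lt_left (by positivity) (by exact_mod_cast hK)
  obtain ⟨η, ⟨hslope, hηδ⟩, hη : 0 < η⟩ :=
    ((hderiv.tendsto_slope_zero_right.eventually (Iio_mem_nhds hlt)).and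
      (nhdsWithin_le_nhds (Iic_mem_nhds hδ)) |>.and self_mem_nhdsWithin).exists
  simp only [zero_add, add_zero, one_pow, smul_eq_mul, inv_mul_lt_iff₀ hη] at hslope
  have hbernoulli := one_add_mul_le_pow (show (-2 : ℝ) ≤ η by linarith) n
  have hK1 : (1 : ℝ) ≤ K := by exact_mod_cast hK.le
  have hpow : 0 ≤ (1 + η) ^ n - 1 := by nlinarith [mul_nonneg n.cast_nonneg hη.le]
  refine ⟨η, hη, hηδ, ?_, ?_⟩ <;>
    rw [← ENNReal.ofReal_natCast, ← ENNReal.ofReal_mul n.cast_nonneg, ← ENNReal.ofReal_coe_nnreal,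
      ← ENNReal.ofReal_mul K.coe_nonneg] <;>
    refine ENNReal.ofReal_le_ofReal ?_ <;> nlinarith [hK1, hpow]

section GaussMap

variable {m : ℕ} {M : Set (Euc m)} {x : Euc m}

lemma isOutwardNormalAt_gaussMap (hM : Convex ℝ M) (hne : (interior M).Nonempty)
    (hx : x ∈ frontier M) : IsOutwardNormalAt M x (gaussMap M x) := by
  obtain ⟨u, hu, hxu⟩ := exists_mem_sphere_forall_inner_le hM hne hx.2
  have hex : ∃ u, IsOutwardNormalAt M x u := ⟨u, hx, mem_sphere_zero_iff_norm.1 hu, fun y hy => by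
    rw [inner_sub_left]
    exact sub_nonpos.2 (hxu y hy)⟩
  rw [gaussMap, dif_pos hex]
  exact hex.choose_spec

namespace IsCenteredBody

lemma isOutwardNormalAt_gaussMap (hM : IsCenteredBody M) (hx : x ∈ frontier M) :
    IsOutwardNormalAt M x (gaussMap M x) :=
  _root_.isOutwardNormalAt_gaussMap hM.convex ⟨0, hM.zero_mem_interior⟩ hx

lemma gaussMap_mem_sphere (hM : IsCenteredBody M) (hx : x ∈ frontier M) :
    gaussMap M x ∈ Metric.sphere (0 : Euc m) 1 :=
  mem_sphere_zero_iff_norm.2 (hM.isOutwardNormalAt_gaussMap hx).2.1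

lemma inner_gaussMap (hM : IsCenteredBody M) (hx : x ∈ frontier M) :
    ⟪x, gaussMap M x⟫ = suppFun M (gaussMap M x) := by
  refine le_antisymm
    (inner_le_suppFun hM.isCompact (hM.isCompact.isClosed.frontier_subset hx) _)
    ((suppFun_le_iff hM.isCompact hM.nonempty).2 fun y hy => ?_)
  simpa only [inner_sub_left, sub_nonpos] using (hM.isOutwardNormalAt_gaussMap hx).2.2 y hy

lemma gaussMap_eq_gaugeNormal (hM : IsCenteredBody M) (hx : x ∈ frontier M)
    (hd : DifferentiableAt ℝ (gauge M) x) : gaussMap M x = gaugeNormal M x := by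
  refine (hM.gaugeNormal_eq hd (hM.gaussMap_mem_sphere hx) ?_).symm
  rw [hM.gauge_eq_one_iff.2 hx, mul_one, hM.inner_gaussMap hx]

end IsCenteredBody

end GaussMap

lemma abs_inner_sub_le_of_normals_near {E : Type*} [NormedAddCommGroup E] [InnerProductSpace ℝ E]
    {x y u v w : E} {δ : ℝ} (hv : ⟪y - x, v⟫ ≤ 0) (hw : ⟪x - y, w⟫ ≤ 0) (hvu : ‖v - u‖ ≤ δ)
    (hwu : ‖w - u‖ ≤ δ) : |⟪x - y, u⟫| ≤ δ * ‖x - y‖ := by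
  have key {a b : E} (h : ⟪a, b⟫ ≤ 0) (hb : ‖b - u‖ ≤ δ) : ⟪a, u⟫ ≤ δ * ‖a‖ := by
    calc ⟪a, u⟫ = ⟪a, b⟫ - ⟪a, b - u⟫ := by rw [inner_sub_right]; ring
      _ ≤ ‖a‖ * ‖b - u‖ := by linarith [(abs_le.1 (abs_real_inner_le_norm a (b - u))).1]
      _ ≤ δ * ‖a‖ := by rw [mul_comm δ]; gcongr
  refine abs_le.2 ⟨?_, key hw hwu⟩
  have := key hv hvu
  rw [← neg_sub x y, inner_neg_left, norm_neg] at this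
  linarith

section RadialProjection

variable {E : Type*} [NormedAddCommGroup E] [InnerProductSpace ℝ E] {M : Set E}

/-- The central projection of `x ≠ 0` onto the boundary of `M`; the cone over a boundary set `X`
is `radialProj M ⁻¹' X`. -/
def radialProj (M : Set E) (x : E) : E := (gauge M x)⁻¹ • x

lemma radialProj_smul (M : Set E) {c : ℝ} (hc : 0 < c) (x : E) :
    radialProj M (c • x) = radialProj M x := by
  rw [radialProj, radialProj, gauge_smul_of_nonneg hc.le, smul_eq_mul, smul_smul, mul_inv,
    mul_right_comm, inv_mul_cancel₀ hc.ne', one_mul]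

namespace IsCenteredBody

lemma radialProj_mem_frontier (hM : IsCenteredBody M) {x : E} (hx : x ≠ 0) :
    radialProj M x ∈ frontier M :=
  hM.inv_smul_mem_frontier hx

lemma radialProj_eq_self (hM : IsCenteredBody M) {x : E} (hx : x ∈ frontier M) :
    radialProj M x = x := by
  rw [radialProj, hM.gauge_eq_one_iff.2 hx, inv_one, one_smul]

lemma ne_zero_of_radialProj_mem_frontier (hM : IsCenteredBody M) {x : E}
    (hx : radialProj M x ∈ frontier M) : x ≠ 0 := by
  rintro rfl
  simpa [radialProj] using (hM.gauge_eq_one_iff.2 hx).symm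

lemma differentiableAt_gauge_radialProj (hM : IsCenteredBody M) {x : E} (hx : x ≠ 0)
    (hd : DifferentiableAt ℝ (gauge M) x) : DifferentiableAt ℝ (gauge M) (radialProj M x) :=
  differentiableAt_gauge_smul M (inv_pos.2 (hM.gauge_pos_iff.2 hx)) hd

lemma gaugeNormal_radialProj (hM : IsCenteredBody M) [CompleteSpace E] {x : E} (hx : x ≠ 0) :
    gaugeNormal M (radialProj M x) = gaugeNormal M x :=
  gaugeNormal_smul M (inv_pos.2 (hM.gauge_pos_iff.2 hx)) x

lemma image_smul_prod_Ioc (hM : IsCenteredBody M) {X : Set E} (hX : X ⊆ frontier M) {η : ℝ}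
    (hη : 0 < η) : (fun p : E × ℝ => p.2 • p.1) '' (X ×ˢ Ioc 1 (1 + η)) =
      ((1 + η) • (radialProj M ⁻¹' X ∩ M)) \ M := by
  have hη1 : 0 < 1 + η := by linarith
  ext y
  simp only [mem_image, mem_prod, mem_Ioc, Prod.exists, mem_sdiff,
    mem_smul_set_iff_inv_smul_mem₀ hη1.ne', mem_inter_iff, mem_preimage,
    radialProj_smul M (inv_pos.2 hη1), ← hM.gauge_le_one_iff, not_le,
    gauge_smul_of_nonneg (inv_pos.2 hη1).le, smul_eq_mul, inv_mul_le_iff₀ hη1, mul_one]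
  constructor
  · rintro ⟨x, s, ⟨hx, hs1, hsη⟩, rfl⟩
    have hs : 0 < s := one_pos.trans hs1
    rw [radialProj_smul M hs, hM.radialProj_eq_self (hX hx), gauge_smul_of_nonneg hs.le,
      hM.gauge_eq_one_iff.2 (hX hx), smul_eq_mul, mul_one]
    exact ⟨⟨hx, hsη⟩, hs1⟩
  · rintro ⟨⟨hy, hyη⟩, hy1⟩
    exact ⟨_, gauge M y, ⟨hy, hy1, hyη⟩, smul_inv_smul₀ (one_pos.trans hy1).ne' y⟩

variable [MeasurableSpace E] [BorelSpace E] [FiniteDimensional ℝ E]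

lemma measure_image_smul_prod_Ioc (hM : IsCenteredBody M) (μ : Measure E) [μ.IsAddHaarMeasure]
    {X : Set E} (hX : X ⊆ frontier M) {η : ℝ} (hη : 0 < η) :
    μ ((fun p : E × ℝ => p.2 • p.1) '' (X ×ˢ Ioc 1 (1 + η))) =
      ENNReal.ofReal ((1 + η) ^ Module.finrank ℝ E - 1) * μ (radialProj M ⁻¹' X ∩ M) := by
  have hη1 : 0 < 1 + η := by linarith
  set A := radialProj M ⁻¹' X ∩ M
  have hfin : μ A ≠ ∞ := measure_ne_top_of_subset inter_subset_right hM.isCompact.measure_ne_top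
  have hinter : ((1 + η) • A) ∩ M = A := by
    ext x
    simp only [A, mem_inter_iff, mem_smul_set_iff_inv_smul_mem₀ hη1.ne', mem_preimage,
      radialProj_smul M (inv_pos.2 hη1), ← hM.gauge_le_one_iff,
      gauge_smul_of_nonneg (inv_pos.2 hη1).le, smul_eq_mul, inv_mul_le_iff₀ hη1, mul_one]
    exact ⟨fun h => ⟨h.1.1, h.2⟩, fun h => ⟨⟨h.1, h.2.trans (by linarith)⟩, h.2⟩⟩
  have hpow : ENNReal.ofReal |(1 + η) ^ Module.finrank ℝ E| =
      1 + ENNReal.ofReal ((1 + η) ^ Module.finrank ℝ E - 1) := by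
    rw [← ENNReal.ofReal_one, ← ENNReal.ofReal_add zero_le_one
      (sub_nonneg.2 (one_le_pow₀ (by linarith))), abs_of_nonneg (by positivity), add_sub_cancel]
  have hsplit := measure_inter_add_sdiff (μ := μ) ((1 + η) • A) hM.isCompact.measurableSet
  rw [hinter, Measure.addHaar_smul, hpow, add_mul, one_mul, ENNReal.add_right_inj hfin] at hsplit
  rw [hM.image_smul_prod_Ioc hX hη, hsplit]

end IsCenteredBody

end RadialProjection

section SurfaceMeasure

variable {d : ℕ} {M : Set (Euc (d + 1))}

namespace IsCenteredBody

lemma exists_agreeUpTo_volume_cone (hM : IsCenteredBody M) {K : NNReal} (hK : 1 < K) :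
    ∃ δ > 0, ∀ X ⊆ frontier M, ∀ x₀ ∈ frontier M,
      (∀ x ∈ X, ‖x - x₀‖ ≤ δ ∧ ‖gaussMap M x - gaussMap M x₀‖ ≤ δ) →
      AgreeUpTo (K ^ (2 * d + 2))
        (ENNReal.ofReal (suppFun M (gaussMap M x₀)) * μH[d] X)
        (hausdorffDensity d * (d + 1) * volume (radialProj M ⁻¹' X ∩ M)) := by
  obtain ⟨r, hr, hrM⟩ := hM.exists_pos_forall_mem_sphere_le_suppFun
  obtain ⟨R, hR, hMR⟩ := hM.isCompact.isBounded.exists_pos_norm_le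
  obtain ⟨δ, hδ, hshell⟩ := exists_shell_agreeUpTo d hK hr hR
  refine ⟨δ, hδ, fun X hX x₀ hx₀ hclose => ?_⟩
  obtain ⟨η, hη, hηδ, hpow⟩ := exists_agreeUpTo_one_add_pow_sub_one (n := d + 1) (by simp) hK hδ
  have hu := hM.gaussMap_mem_sphere hx₀
  have hfront : ∀ x ∈ frontier M, x ∈ M := fun x hx => hM.isCompact.isClosed.frontier_subset hx
  have hchord : ∀ x ∈ X, ∀ y ∈ X, |⟪x - y, gaussMap M x₀⟫| ≤ δ * ‖x - y‖ := fun x hx y hy =>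
    abs_inner_sub_le_of_normals_near
      ((hM.isOutwardNormalAt_gaussMap (hX hx)).2.2 y (hfront y (hX hy)))
      ((hM.isOutwardNormalAt_gaussMap (hX hy)).2.2 x (hfront x (hX hx)))
      (hclose x hx).2 (hclose y hy).2
  have hvol := hshell (mem_sphere_zero_iff_norm.1 hu) (hMR x₀ (hfront x₀ hx₀))
    (hM.inner_gaussMap hx₀ ▸ hrM _ hu) (fun x hx => (hclose x hx).1) hchord hηδ
  rw [hM.measure_image_smul_prod_Ioc volume hX hη, finrank_euclideanSpace_fin,
    hM.inner_gaussMap hx₀] at hvol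
  have hcone := hpow.mul_left (hausdorffDensity d * volume (radialProj M ⁻¹' X ∩ M))
  rw [mul_right_comm, mul_assoc _ _ (volume _)] at hcone
  refine .of_mul_left (ENNReal.ofReal_pos.2 hη).ne' ENNReal.ofReal_ne_top ?_
  convert hvol.symm.trans hcone using 1
  · rw [pow_succ]
  · ring
  · push_cast
    ring

lemma hausdorffMeasure_frontier_inter_not_differentiableAt (hM : IsCenteredBody M) :
    μH[d] (frontier M ∩ {x | ¬ DifferentiableAt ℝ (gauge M) x}) = 0 := by
  obtain ⟨δ, hδ, hcone⟩ := hM.exists_agreeUpTo_volume_cone (K := 2) (by norm_num)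
  refine measure_eq_zero_of_forall_dist_le (fun x => (x, gaussMap M x)) hδ fun X hX hdist => ?_
  rcases X.eq_empty_or_nonempty with rfl | ⟨x₀, hx₀⟩
  · exact measure_empty
  have hXf : X ⊆ frontier M := hX.trans inter_subset_left
  have hvol : volume (radialProj M ⁻¹' X ∩ M) = 0 := by
    refine measure_mono_null (fun x hx => ?_) (ae_iff.1 (hM.ae_differentiableAt_gauge volume))
    exact fun hd => (hX hx.1).2 (hM.differentiableAt_gauge_radialProj
      (hM.ne_zero_of_radialProj_mem_frontier (hXf hx.1)) hd)
  have hle := (hcone X hXf x₀ (hXf hx₀) fun x hx => by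
    simpa only [← dist_eq_norm, Prod.dist_eq, max_le_iff] using hdist x hx x₀ hx₀).1
  rw [hvol, mul_zero, mul_zero, nonpos_iff_eq_zero, mul_eq_zero, ENNReal.ofReal_eq_zero] at hle
  exact hle.resolve_left (hM.suppFun_pos (hM.gaussMap_mem_sphere (hXf hx₀))).not_ge

lemma ae_differentiableAt_gauge_frontier (hM : IsCenteredBody M) :
    ∀ᵐ x ∂(μH[d] : Measure (Euc (d + 1))).restrict (frontier M),
      DifferentiableAt ℝ (gauge M) x := by
  rw [ae_restrict_iff' isClosed_frontier.measurableSet, ae_iff]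
  simpa only [Classical.not_imp] using! hM.hausdorffMeasure_frontier_inter_not_differentiableAt

lemma gaussMap_ae_eq_gaugeNormal (hM : IsCenteredBody M) :
    gaussMap M =ᵐ[μH[d].restrict (frontier M)] gaugeNormal M := by
  filter_upwards [hM.ae_differentiableAt_gauge_frontier,
    ae_restrict_mem isClosed_frontier.measurableSet] with x hd hx
  exact hM.gaussMap_eq_gaugeNormal hx hd

lemma exists_agreeUpTo_inv_suppFun (hM : IsCenteredBody M) {K : NNReal} (hK : 1 < K) :
    ∃ δ > 0, ∀ u ∈ Metric.sphere 0 1, ∀ v ∈ Metric.sphere 0 1, dist u v ≤ δ →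
      AgreeUpTo K (ENNReal.ofReal (suppFun M u)⁻¹) (ENNReal.ofReal (suppFun M v)⁻¹) := by
  obtain ⟨δ, hδ, hratio⟩ := exists_forall_dist_le_imp_le_mul (isCompact_sphere (0 : Euc (d + 1)) 1)
    ((continuous_suppFun hM.isCompact hM.nonempty).continuousOn.inv₀
      fun u hu => (hM.suppFun_pos hu).ne') (fun u hu => inv_pos.2 (hM.suppFun_pos hu))
    (K := K) (by exact_mod_cast hK)
  refine ⟨δ, hδ, fun u hu v hv huv => ?_⟩
  rw [AgreeUpTo, ← ENNReal.ofReal_coe_nnreal, ← ENNReal.ofReal_mul K.coe_nonneg,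
    ← ENNReal.ofReal_mul K.coe_nonneg]
  exact ⟨ENNReal.ofReal_le_ofReal (hratio u hu v hv huv),
    ENNReal.ofReal_le_ofReal (hratio v hv u hu (dist_comm u v ▸ huv))⟩

lemma measurable_radialProj (hM : IsCenteredBody M) : Measurable (radialProj M) :=
  hM.continuous_gauge.measurable.inv.smul measurable_id

lemma exists_agreeUpTo_lintegral_cone (hM : IsCenteredBody M) {K : NNReal} (hK : 1 < K) :
    ∃ δ > 0, ∀ X ⊆ frontier M ∩ {x | DifferentiableAt ℝ (gauge M) x}, MeasurableSet X →
      (∀ x ∈ X, ∀ y ∈ X, dist (x, gaugeNormal M x) (y, gaugeNormal M y) ≤ δ) →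
      AgreeUpTo (K ^ (2 * d + 3)) (μH[d] X)
        (hausdorffDensity d * (d + 1) *
          ∫⁻ x in radialProj M ⁻¹' X ∩ M, ENNReal.ofReal (suppFun M (gaugeNormal M x))⁻¹) := by
  obtain ⟨δ₁, hδ₁, hcone⟩ := hM.exists_agreeUpTo_volume_cone hK
  obtain ⟨δ₂, hδ₂, hsupp⟩ := hM.exists_agreeUpTo_inv_suppFun hK
  refine ⟨min δ₁ δ₂, lt_min hδ₁ hδ₂, fun X hX hXm hdist => ?_⟩
  rcases X.eq_empty_or_nonempty with rfl | ⟨x₀, hx₀⟩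
  · simp [AgreeUpTo]
  simp only [Prod.dist_eq, max_le_iff, le_min_iff] at hdist
  have hnormal : ∀ x ∈ X, gaussMap M x = gaugeNormal M x := fun x hx =>
    hM.gaussMap_eq_gaugeNormal (hX hx).1 (hX hx).2
  have hsphere : ∀ x ∈ X, gaugeNormal M x ∈ Metric.sphere 0 1 := fun x hx =>
    hM.gaugeNormal_mem_sphere (hX hx).2
  have hvol := hcone X (hX.trans inter_subset_left) x₀ (hX hx₀).1 fun x hx => by
    rw [hnormal x hx, hnormal x₀ hx₀, ← dist_eq_norm, ← dist_eq_norm]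
    exact ⟨(hdist x hx x₀ hx₀).1.1, (hdist x hx x₀ hx₀).1.2⟩
  have hint := agreeUpTo_setLIntegral (μ := volume)
    (g := fun x => ENNReal.ofReal (suppFun M (gaugeNormal M x))⁻¹)
    ((hM.measurable_radialProj hXm).inter hM.isCompact.measurableSet) ENNReal.coe_ne_top
    fun x (hx : x ∈ radialProj M ⁻¹' X ∩ M) => by
      rw [← hM.gaugeNormal_radialProj (hM.ne_zero_of_radialProj_mem_frontier (hX hx.1).1)]
      exact hsupp _ (hsphere _ hx.1) _ (hsphere x₀ hx₀) (hdist _ hx.1 x₀ hx₀).2.2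
  have hinv : ENNReal.ofReal (suppFun M (gaugeNormal M x₀))⁻¹ *
      ENNReal.ofReal (suppFun M (gaugeNormal M x₀)) = 1 := by
    have hpos := hM.suppFun_pos (hsphere x₀ hx₀)
    rw [← ENNReal.ofReal_mul (inv_pos.2 hpos).le, inv_mul_cancel₀ hpos.ne', ENNReal.ofReal_one]
  rw [hnormal x₀ hx₀] at hvol
  have hcone := hvol.mul_left (ENNReal.ofReal (suppFun M (gaugeNormal M x₀))⁻¹)
  rw [← mul_assoc, hinv, one_mul, mul_left_comm] at hcone
  simpa only [← pow_succ] using hcone.trans (hint.symm.mul_left _)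

/-- Lebesgue measure on `M`, normalised so that its image under `radialProj M` is the surface
measure of the boundary. -/
def coneMeasure (M : Set (Euc (d + 1))) : Measure (Euc (d + 1)) :=
  (hausdorffDensity d * (d + 1) : NNReal) •
    (volume.restrict M).withDensity fun x => ENNReal.ofReal (suppFun M (gaugeNormal M x))⁻¹

lemma coneMeasure_absolutelyContinuous (M : Set (Euc (d + 1))) : coneMeasure M ≪ volume :=
  (((withDensity_absolutelyContinuous _ _).trans Measure.restrict_le_self.absolutelyContinuous)
    ).smul_left _

lemma coneMeasure_apply {s : Set (Euc (d + 1))} (hs : MeasurableSet s) :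
    coneMeasure M s = hausdorffDensity d * (d + 1) *
      ∫⁻ x in s ∩ M, ENNReal.ofReal (suppFun M (gaugeNormal M x))⁻¹ := by
  rw [coneMeasure, Measure.smul_apply, withDensity_apply _ hs, Measure.restrict_restrict hs,
    ENNReal.smul_def, smul_eq_mul]
  norm_cast

lemma hausdorffMeasure_restrict_frontier (hM : IsCenteredBody M) :
    μH[d].restrict (frontier M) = (coneMeasure M).map (radialProj M) := by
  have hD : MeasurableSet {x | DifferentiableAt ℝ (gauge M) x} :=
    measurableSet_of_differentiableAt ℝ _
  have hS : MeasurableSet (frontier M ∩ {x | DifferentiableAt ℝ (gauge M) x}) :=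
    isClosed_frontier.measurableSet.inter hD
  have hproj := hM.measurable_radialProj
  refine measure_eq_of_forall_agreeUpTo hS ?_ ?_
    (measurable_id.prodMk (measurable_gaugeNormal M)) (2 * d + 3) fun K hK => ?_
  · filter_upwards [hM.ae_differentiableAt_gauge_frontier,
      ae_restrict_mem isClosed_frontier.measurableSet] with x hd hx
    exact ⟨hx, hd⟩
  · rw [← mem_ae_iff, mem_ae_map_iff hproj.aemeasurable hS]
    filter_upwards
      [(coneMeasure_absolutelyContinuous M).ae_le (hM.ae_differentiableAt_gauge volume),
        (coneMeasure_absolutelyContinuous M).ae_le (Measure.ae_ne volume 0)] with x hd hx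
    exact ⟨hM.radialProj_mem_frontier hx, hM.differentiableAt_gauge_radialProj hx hd⟩
  · obtain ⟨δ, hδ, hcone⟩ := hM.exists_agreeUpTo_lintegral_cone hK
    refine ⟨δ, hδ, fun X hX hXm hdist => ?_⟩
    rw [Measure.restrict_eq_self _ (hX.trans inter_subset_left), Measure.map_apply hproj hXm,
      coneMeasure_apply (hproj hXm)]
    exact hcone X hX hXm hdist

lemma surfMeasure_eq_map_coneMeasure (hM : IsCenteredBody M) :
    surfMeasure M = (coneMeasure M).map (gaugeNormal M) := by
  rw [surfMeasure, Nat.cast_succ, add_sub_cancel_right,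
    Measure.map_congr hM.gaussMap_ae_eq_gaugeNormal, hM.hausdorffMeasure_restrict_frontier,
    Measure.map_map (measurable_gaugeNormal M) hM.measurable_radialProj]
  refine Measure.map_congr ((coneMeasure_absolutelyContinuous M).ae_le ?_)
  filter_upwards [Measure.ae_ne volume 0] with x hx using hM.gaugeNormal_radialProj hx

end IsCenteredBody

end SurfaceMeasure

section MinkowskiMeasure

variable {E : Type*} [NormedAddCommGroup E] [InnerProductSpace ℝ E] [MeasurableSpace E]

/-- The hypotheses of Minkowski's existence problem: a finite measure carried by the unit sphere,
with barycenter the origin, which charges every open half-space bounded by a hyperplane through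
the origin. -/
structure IsMinkowskiMeasure (σ : Measure E) : Prop where
  isFiniteMeasure : IsFiniteMeasure σ
  ae_mem_sphere : ∀ᵐ u ∂σ, u ∈ Metric.sphere (0 : E) 1
  integral_id : ∫ u, u ∂σ = 0
  halfSpace_ne_zero : ∀ v ≠ 0, σ {u | 0 < ⟪v, u⟫} ≠ 0

lemma integrable_of_ae_mem_sphere [FiniteDimensional ℝ E] [BorelSpace E]
    {F : Type*} [NormedAddCommGroup F]
    {σ : Measure E} [IsFiniteMeasure σ] (hσ : ∀ᵐ u ∂σ, u ∈ Metric.sphere (0 : E) 1)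
    {f : E → F} (hf : Continuous f) : Integrable f σ := by
  obtain ⟨B, hB⟩ := (isCompact_sphere (0 : E) 1).exists_bound_of_continuousOn hf.continuousOn
  exact .of_bound hf.aestronglyMeasurable B (hσ.mono hB)

end MinkowskiMeasure

section Translation

variable {E : Type*} [NormedAddCommGroup E] [InnerProductSpace ℝ E] [FiniteDimensional ℝ E]
  [Nontrivial E] {M : Set E}

namespace IsCenteredBody

lemma vadd_subset_wulffShape_inner (hM : IsCenteredBody M) (v : E) {s : ℝ}
    (hs : ∀ u ∈ Metric.sphere (0 : E) 1, |s * (⟪v, u⟫ / suppFun M u)| ≤ 1 / 2) :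
    (s • v) +ᵥ M ⊆ wulffShape M (fun u => ⟪v, u⟫) s := by
  rintro _ ⟨x, hx, rfl⟩
  refine (hM.wulffGauge_le_iff (by fun_prop)).2 fun u hu => ?_
  have hh := hM.suppFun_pos hu
  set a := s * (⟪v, u⟫ / suppFun M u) with ha
  have hle : ⟪s • v + x, u⟫ / suppFun M u ≤ 1 + a := by
    rw [div_le_iff₀ hh, add_mul, one_mul, ha, mul_assoc, div_mul_cancel₀ _ hh.ne',
      inner_add_left, real_inner_smul_left, add_comm]
    gcongr
    exact inner_le_suppFun hM.isCompact hx u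
  calc ⟪s • v + x, u⟫ / suppFun M u * (1 - a) ≤ (1 + a) * (1 - a) :=
        mul_le_mul_of_nonneg_right hle (by linarith [(abs_le.1 (hs u hu)).2])
    _ ≤ 1 := by linarith [sq_nonneg a]

-- The Wulff shapes contain translates of `M`, so their volume is minimal at `s = 0`.
lemma setIntegral_inner_gaugeNormal_div [MeasurableSpace E] [BorelSpace E]
    (hM : IsCenteredBody M) (v : E) (μ : Measure E) [μ.IsAddHaarMeasure] :
    ∫ x in M, ⟪v, gaugeNormal M x⟫ / suppFun M (gaugeNormal M x) ∂μ = 0 := by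
  have hv : Continuous fun u : E => ⟪v, u⟫ := by fun_prop
  obtain ⟨δ, hδ, hsmall⟩ := hM.exists_pos_forall_mem_sphere_abs_mul_le hv
  have hmin : IsLocalMin (fun s => μ.real (wulffShape M (fun u => ⟪v, u⟫) s)) 0 := by
    filter_upwards [Metric.closedBall_mem_nhds (0 : ℝ) hδ] with s hs
    have hs' := hsmall s (mem_closedBall_zero_iff.1 hs)
    calc μ.real (wulffShape M (fun u => ⟪v, u⟫) 0) = μ.real ((s • v) +ᵥ M) := by
          rw [hM.wulffShape_zero, measureReal_def, measureReal_def, measure_vadd]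
      _ ≤ μ.real (wulffShape M (fun u => ⟪v, u⟫) s) :=
          measureReal_mono (hM.vadd_subset_wulffShape_inner v hs')
            (hM.isCompact_wulffShape hv hs').measure_lt_top.ne
  exact (mul_eq_zero.1 (hmin.hasDerivAt_eq_zero (hM.hasDerivAt_measureReal_wulffShape hv μ))
    ).resolve_left (Nat.cast_ne_zero.2 Module.finrank_pos.ne')

lemma eventually_inner_gaugeNormal_pos (hM : IsCenteredBody M) {v : E} (hv : v ≠ 0) :
    ∀ᶠ x in 𝓝 v, DifferentiableAt ℝ (gauge M) x → 0 < ⟪v, gaugeNormal M x⟫ := by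
  obtain ⟨c, hc, hcM⟩ := hM.exists_pos_forall_mem_sphere_le_suppFun
  have hlim : Filter.Tendsto (fun x => c * gauge M x - ‖x - v‖) (𝓝 v) (𝓝 (c * gauge M v)) := by
    have := hM.continuous_gauge
    simpa using Continuous.tendsto (f := fun x => c * gauge M x - ‖x - v‖) (by fun_prop) v
  filter_upwards [hlim.eventually (lt_mem_nhds (mul_pos hc (hM.gauge_pos_iff.2 hv)))] with x hx hd
  have hu := hM.gaugeNormal_mem_sphere hd
  have hinner := hM.inner_gaugeNormal hd
  have hle : c * gauge M x ≤ suppFun M (gaugeNormal M x) * gauge M x :=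
    mul_le_mul_of_nonneg_right (hcM _ hu) (gauge_nonneg x)
  have hdiff : ⟪x - v, gaugeNormal M x⟫ ≤ ‖x - v‖ := by
    simpa [mem_sphere_zero_iff_norm.1 hu] using real_inner_le_norm (x - v) (gaugeNormal M x)
  rw [inner_sub_left] at hdiff
  linarith

lemma restrict_inner_gaugeNormal_pos_ne_zero [MeasurableSpace E] [BorelSpace E]
    (hM : IsCenteredBody M) {v : E} (hv : v ≠ 0) {μ : Measure E} [μ.IsAddHaarMeasure] :
    μ.restrict M {x | 0 < ⟪v, gaugeNormal M x⟫} ≠ 0 := fun hzero => by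
  obtain ⟨t, ht, htM⟩ : ∃ t : ℝ, 0 < t ∧ t • v ∈ interior M := by
    have hlim : Filter.Tendsto (fun t : ℝ => t • v) (𝓝[>] 0) (𝓝 0) := by
      simpa using (Continuous.tendsto (f := fun t : ℝ => t • v) (by fun_prop) 0).mono_left
        nhdsWithin_le_nhds
    exact ((eventually_mem_nhdsWithin.and (hlim.eventually
      (isOpen_interior.mem_nhds hM.zero_mem_interior))).exists)
  have hae : ∀ᵐ x ∂μ, x ∈ M → ¬ 0 < ⟪v, gaugeNormal M x⟫ :=
    ae_imp_of_ae_restrict (measure_eq_zero_iff_ae_notMem.1 hzero)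
  have hnhds : ∀ᶠ x in 𝓝 (t • v),
      x ∈ M ∧ (DifferentiableAt ℝ (gauge M) x → 0 < ⟪t • v, gaugeNormal M x⟫) :=
    Filter.Eventually.and (mem_interior_iff_mem_nhds.1 htM)
      (hM.eventually_inner_gaugeNormal_pos (smul_ne_zero ht.ne' hv))
  refine (Measure.measure_pos_of_mem_nhds μ hnhds).ne' (measure_eq_zero_iff_ae_notMem.2 ?_)
  filter_upwards [hae, hM.ae_differentiableAt_gauge μ] with x hx hd hxM
  have hpos := hxM.2 hd
  rw [real_inner_smul_left] at hpos
  exact hx hxM.1 (pos_of_mul_pos_right hpos ht.le)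

end IsCenteredBody

end Translation

section SurfaceMeasureOfCenteredBody

variable {d : ℕ} {M : Set (Euc (d + 1))} {f : Euc (d + 1) → ℝ}

namespace IsCenteredBody

lemma measurable_inv_suppFun_gaugeNormal (hM : IsCenteredBody M) :
    Measurable fun x => (suppFun M (gaugeNormal M x))⁻¹ := by
  simpa only [one_div] using hM.measurable_comp_gaugeNormal_div (f := fun _ => 1) continuous_const

lemma restrict_absolutelyContinuous_coneMeasure (hM : IsCenteredBody M) :
    volume.restrict M ≪ coneMeasure M := by
  refine (withDensity_absolutelyContinuous'
    hM.measurable_inv_suppFun_gaugeNormal.ennreal_ofReal.aemeasurable ?_).trans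
    (Measure.absolutelyContinuous_smul ?_)
  · filter_upwards [ae_restrict_of_ae (hM.ae_differentiableAt_gauge volume)] with x hx
    exact (ENNReal.ofReal_pos.2 (inv_pos.2 (hM.suppFun_pos (hM.gaugeNormal_mem_sphere hx)))).ne'
  · exact ENNReal.coe_ne_zero.2 (mul_pos (hausdorffDensity_pos d) d.cast_add_one_pos).ne'

lemma isFiniteMeasure_coneMeasure (hM : IsCenteredBody M) : IsFiniteMeasure (coneMeasure M) := by
  obtain ⟨c, hc, hcM⟩ := hM.exists_pos_forall_mem_sphere_le_suppFun
  have hint : IntegrableOn (fun x => (suppFun M (gaugeNormal M x))⁻¹) M := by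
    refine .of_bound hM.isCompact.measure_lt_top
      hM.measurable_inv_suppFun_gaugeNormal.aestronglyMeasurable c⁻¹ ?_
    filter_upwards [ae_restrict_of_ae (hM.ae_differentiableAt_gauge volume)] with x hx
    have hle := hcM _ (hM.gaugeNormal_mem_sphere hx)
    rw [Real.norm_of_nonneg (inv_nonneg.2 (hc.le.trans hle))]
    exact inv_anti₀ hc hle
  have := isFiniteMeasure_withDensity_ofReal hint.hasFiniteIntegral
  exact inferInstanceAs (IsFiniteMeasure (_ • _))

lemma integral_surfMeasure (hM : IsCenteredBody M) (hf : Continuous f) :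
    ∫ u, f u ∂surfMeasure M = hausdorffDensity d * (d + 1) *
      ∫ x in M, f (gaugeNormal M x) / suppFun M (gaugeNormal M x) := by
  rw [hM.surfMeasure_eq_map_coneMeasure, integral_map (measurable_gaugeNormal M).aemeasurable
    hf.aestronglyMeasurable, coneMeasure, integral_smul_nnreal_measure,
    integral_withDensity_eq_integral_toReal_smul
      hM.measurable_inv_suppFun_gaugeNormal.ennreal_ofReal (by simp), NNReal.smul_def, smul_eq_mul,
    NNReal.coe_mul]
  congr 1
  refine integral_congr_ae ?_
  filter_upwards [ae_restrict_of_ae (hM.ae_differentiableAt_gauge volume)] with x hx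
  rw [ENNReal.toReal_ofReal (inv_pos.2 (hM.suppFun_pos (hM.gaugeNormal_mem_sphere hx))).le,
    smul_eq_mul, div_eq_inv_mul]

lemma isMinkowskiMeasure_surfMeasure (hM : IsCenteredBody M) :
    IsMinkowskiMeasure (surfMeasure M) := by
  have hn := measurable_gaugeNormal M
  have hfin : IsFiniteMeasure (surfMeasure M) := by
    have := hM.isFiniteMeasure_coneMeasure
    rw [hM.surfMeasure_eq_map_coneMeasure]
    infer_instance
  have hsphere : ∀ᵐ u ∂surfMeasure M, u ∈ Metric.sphere (0 : Euc (d + 1)) 1 := by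
    rw [hM.surfMeasure_eq_map_coneMeasure]
    refine (ae_map_iff hn.aemeasurable Metric.isClosed_sphere.measurableSet).2 ?_
    filter_upwards [(coneMeasure_absolutelyContinuous M).ae_le
      (hM.ae_differentiableAt_gauge volume)] with x hx using hM.gaugeNormal_mem_sphere hx
  refine ⟨hfin, hsphere, ext_inner_left ℝ fun v => ?_, fun v hv hzero => ?_⟩
  · have hint : Integrable (fun u => u) (surfMeasure M) :=
      integrable_of_ae_mem_sphere hsphere continuous_id
    rw [inner_zero_right, ← integral_inner hint, hM.integral_surfMeasure (by fun_prop),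
      hM.setIntegral_inner_gaugeNormal_div, mul_zero]
  · rw [hM.surfMeasure_eq_map_coneMeasure, Measure.map_apply hn
      (isOpen_lt continuous_const (by fun_prop)).measurableSet] at hzero
    exact hM.restrict_inner_gaugeNormal_pos_ne_zero hv
      (hM.restrict_absolutelyContinuous_coneMeasure hzero)

end IsCenteredBody

end SurfaceMeasureOfCenteredBody

section SupportFunctionOperations

variable {E : Type*} [NormedAddCommGroup E] [InnerProductSpace ℝ E] {M : Set E}

lemma suppFun_vadd (hM : IsCompact M) (hne : M.Nonempty) (z u : E) :
    suppFun (z +ᵥ M) u = ⟪z, u⟫ + suppFun M u := by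
  have himage : (fun x => ⟪x, u⟫) '' (z +ᵥ M) = (⟪z, u⟫ + ·) '' ((fun x => ⟪x, u⟫) '' M) := by
    simp only [← image_vadd, image_image, vadd_eq_add, inner_add_left]
  have hmono : Monotone (⟪z, u⟫ + · : ℝ → ℝ) := fun _ _ h => add_le_add_right h _
  exact (himage ▸ hmono.map_isGreatest (isGreatest_suppFun hM hne u)).csSup_eq

lemma suppFun_closure_convexHull_le [FiniteDimensional ℝ E] (hM : IsCompact M) (hne : M.Nonempty)
    (u : E) : suppFun (closure (convexHull ℝ M)) u ≤ suppFun M u := by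
  have hhull : closure (convexHull ℝ M) ⊆ {x | ⟪x, u⟫ ≤ suppFun M u} :=
    closure_minimal
      (convexHull_min (fun _ hx => inner_le_suppFun hM hx u)
        (convex_halfSpace_le ⟨fun x y => inner_add_left x y u,
          fun c x => real_inner_smul_left x u c⟩ _))
      (isClosed_le (by fun_prop) continuous_const)
  exact (suppFun_le_iff (isBounded_convexHull.2 hM.isBounded).isCompact_closure
    (convexHull_nonempty_iff.2 hne).closure).2 hhull

lemma suppFun_le_suppFun_add_dist (K K' : TopologicalSpace.NonemptyCompacts E) {u : E}
    (hu : u ∈ Metric.sphere (0 : E) 1) :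
    suppFun (K : Set E) u ≤ suppFun (K' : Set E) u + dist K K' := by
  refine (suppFun_le_iff K.isCompact K.nonempty).2 fun x hx => ?_
  obtain ⟨y, hy, hxy⟩ := K'.isCompact.exists_infDist_eq_dist K'.nonempty x
  have hdist : ‖x - y‖ ≤ dist K K' := by
    rw [← dist_eq_norm, ← hxy, Metric.NonemptyCompacts.dist_eq]
    exact Metric.infDist_le_hausdorffDist_of_mem hx (edist_ne_top K K')
  calc ⟪x, u⟫ = ⟪y, u⟫ + ⟪x - y, u⟫ := by rw [← inner_add_left, add_sub_cancel]
    _ ≤ suppFun (K' : Set E) u + dist K K' := by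
        gcongr
        · exact inner_le_suppFun K'.isCompact hy u
        · refine (real_inner_le_norm _ _).trans ?_
          rwa [mem_sphere_zero_iff_norm.1 hu, mul_one]

lemma isCenteredBody_neg_vadd (hconv : Convex ℝ M) (hM : IsCompact M) {z : E}
    (hz : z ∈ interior M) : IsCenteredBody ((-z) +ᵥ M) where
  convex := hconv.vadd (-z)
  isCompact := hM.vadd (-z)
  zero_mem_interior := by
    rw [interior_vadd]
    exact ⟨z, hz, by simp⟩

end SupportFunctionOperations

lemma upperSemicontinuous_measure_nonemptyCompacts {X : Type*} [MetricSpace X] [ProperSpace X]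
    [MeasurableSpace X] [OpensMeasurableSpace X] (μ : Measure X) [IsFiniteMeasureOnCompacts μ] :
    UpperSemicontinuous fun K : TopologicalSpace.NonemptyCompacts X => μ (K : Set X) := by
  intro K y hy
  obtain ⟨r, hr, hlt⟩ := Metric.eventually_nhds_iff.1
    ((tendsto_measure_cthickening_of_isCompact (μ := μ) K.isCompact).eventually (gt_mem_nhds hy))
  filter_upwards [Metric.ball_mem_nhds K (half_pos hr)] with K' hK'
  have hsub : (K' : Set X) ⊆ Metric.cthickening (r / 2) (K : Set X) := fun x hx => by
    rw [Metric.mem_ball, Metric.NonemptyCompacts.dist_eq] at hK'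
    obtain ⟨z, hz, hxz⟩ :=
      Metric.exists_dist_lt_of_hausdorffDist_lt hx hK' (edist_ne_top K' K)
    exact Metric.mem_cthickening_of_dist_le _ _ _ _ hz hxz.le
  refine (measure_mono hsub).trans_lt (hlt ?_)
  rw [Real.dist_eq, sub_zero, abs_of_pos (half_pos hr)]
  exact half_lt_self hr

lemma isClosed_mem_nonemptyCompacts {X : Type*} [TopologicalSpace X] [T1Space X] (x : X) :
    IsClosed {K : TopologicalSpace.NonemptyCompacts X | x ∈ (K : Set X)} := by
  simpa only [inter_singleton_nonempty] using
    TopologicalSpace.NonemptyCompacts.isClosed_inter_nonempty_of_isClosed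
      (isClosed_singleton (x := x))

section MinkowskiFunctional

variable {E : Type*} [NormedAddCommGroup E] [InnerProductSpace ℝ E] [FiniteDimensional ℝ E]
  [MeasurableSpace E] [BorelSpace E] {σ : Measure E}

namespace IsMinkowskiMeasure

lemma integrable (hσ : IsMinkowskiMeasure σ) {F : Type*} [NormedAddCommGroup F] {f : E → F}
    (hf : Continuous f) : Integrable f σ :=
  have := hσ.isFiniteMeasure
  integrable_of_ae_mem_sphere hσ.ae_mem_sphere hf

lemma integral_inner (hσ : IsMinkowskiMeasure σ) (v : E) : ∫ u, ⟪v, u⟫ ∂σ = 0 := by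
  rw [_root_.integral_inner (hσ.integrable continuous_id'), hσ.integral_id, inner_zero_right]

lemma integral_mono (hσ : IsMinkowskiMeasure σ) {f g : E → ℝ} (hf : Continuous f)
    (hg : Continuous g) (hfg : ∀ u ∈ Metric.sphere (0 : E) 1, f u ≤ g u) :
    ∫ u, f u ∂σ ≤ ∫ u, g u ∂σ :=
  integral_mono_ae (hσ.integrable hf) (hσ.integrable hg) (hσ.ae_mem_sphere.mono hfg)

lemma lipschitzWith_integral (hσ : IsMinkowskiMeasure σ) {X : Type*} [PseudoMetricSpace X]
    {F : X → E → ℝ} (hcont : ∀ x, Continuous (F x))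
    (hdist : ∀ x y, ∀ u ∈ Metric.sphere (0 : E) 1, F x u ≤ F y u + dist x y) :
    LipschitzWith (σ.real univ).toNNReal fun x => ∫ u, F x u ∂σ := by
  have := hσ.isFiniteMeasure
  refine LipschitzWith.of_le_add_mul _ fun x y => ?_
  calc ∫ u, F x u ∂σ ≤ ∫ u, (F y u + dist x y) ∂σ :=
        hσ.integral_mono (hcont x) ((hcont y).add continuous_const) (hdist x y)
    _ = ∫ u, F y u ∂σ + (σ.real univ).toNNReal * dist x y := by
        rw [integral_add (hσ.integrable (hcont y)) (integrable_const _), integral_const,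
          smul_eq_mul, Real.coe_toNNReal _ measureReal_nonneg]

lemma continuous_integral_suppFun (hσ : IsMinkowskiMeasure σ) :
    Continuous fun K : TopologicalSpace.NonemptyCompacts E => ∫ u, suppFun (K : Set E) u ∂σ :=
  (hσ.lipschitzWith_integral (fun K => continuous_suppFun K.isCompact K.nonempty)
    fun K K' _ hu => suppFun_le_suppFun_add_dist K K' hu).continuous

lemma continuous_integral_posPart (hσ : IsMinkowskiMeasure σ) :
    Continuous fun x : E => ∫ u, max ⟪x, u⟫ 0 ∂σ := by
  refine (hσ.lipschitzWith_integral (fun x => by fun_prop) fun x y u hu => ?_).continuous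
  have hxy : ⟪x - y, u⟫ ≤ dist x y := by
    simpa [dist_eq_norm, mem_sphere_zero_iff_norm.1 hu] using real_inner_le_norm (x - y) u
  rw [inner_sub_left] at hxy
  refine max_le ?_ ?_
  · linarith [le_max_left ⟪y, u⟫ (0 : ℝ)]
  · linarith [le_max_right ⟪y, u⟫ (0 : ℝ), dist_nonneg (x := x) (y := y)]

lemma integral_posPart_pos (hσ : IsMinkowskiMeasure σ) {x : E} (hx : x ≠ 0) :
    0 < ∫ u, max ⟪x, u⟫ 0 ∂σ := by
  refine (integral_pos_iff_support_of_nonneg (fun _ => le_max_right _ (0 : ℝ))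
    (hσ.integrable (by fun_prop))).2
    ((pos_iff_ne_zero.2 (hσ.halfSpace_ne_zero x hx)).trans_le (measure_mono fun u hu => ?_))
  exact (lt_max_of_lt_left (mem_ofPred.1 hu)).ne'

lemma exists_pos_forall_mul_norm_le_integral_posPart [Nontrivial E]
    (hσ : IsMinkowskiMeasure σ) :
    ∃ c : ℝ, 0 < c ∧ ∀ x, c * ‖x‖ ≤ ∫ u, max ⟪x, u⟫ 0 ∂σ := by
  obtain ⟨x₀, hx₀, hmin⟩ := (isCompact_sphere (0 : E) 1).exists_isMinOn
    (NormedSpace.sphere_nonempty.2 zero_le_one) hσ.continuous_integral_posPart.continuousOn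
  refine ⟨_, hσ.integral_posPart_pos (ne_zero_of_mem_unit_sphere ⟨x₀, hx₀⟩), fun x => ?_⟩
  rcases eq_or_ne x 0 with rfl | hx
  · simp
  have hn : 0 < ‖x‖ := norm_pos_iff.2 hx
  have hhom : ∫ u, max ⟪‖x‖⁻¹ • x, u⟫ 0 ∂σ = ‖x‖⁻¹ * ∫ u, max ⟪x, u⟫ 0 ∂σ := by
    rw [← integral_const_mul]
    refine integral_congr_ae (.of_forall fun u => ?_)
    simp only [real_inner_smul_left, mul_max_of_nonneg _ _ (inv_nonneg.2 hn.le), mul_zero]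
  have hle := isMinOn_iff.1 hmin (‖x‖⁻¹ • x) (mem_sphere_zero_iff_norm.2 (norm_smul_inv_norm hx))
  rwa [hhom, ← div_eq_inv_mul, le_div_iff₀ hn] at hle

lemma subset_closedBall_of_integral_suppFun_le (hσ : IsMinkowskiMeasure σ) {c : ℝ} (hc : 0 < c)
    (hbound : ∀ x, c * ‖x‖ ≤ ∫ u, max ⟪x, u⟫ 0 ∂σ) {K : Set E} (hK : IsCompact K)
    (h0 : 0 ∈ K) {B : ℝ} (hB : ∫ u, suppFun K u ∂σ ≤ B) : K ⊆ Metric.closedBall 0 (B / c) := by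
  intro x hx
  rw [mem_closedBall_zero_iff, le_div_iff₀ hc, mul_comm]
  calc c * ‖x‖ ≤ ∫ u, max ⟪x, u⟫ 0 ∂σ := hbound x
    _ ≤ ∫ u, suppFun K u ∂σ :=
        hσ.integral_mono (by fun_prop) (continuous_suppFun hK ⟨0, h0⟩) fun u _ =>
          max_le (inner_le_suppFun hK hx u) (by simpa using inner_le_suppFun hK h0 u)
    _ ≤ B := hB

lemma integral_suppFun_vadd (hσ : IsMinkowskiMeasure σ) {K : Set E} (hK : IsCompact K)
    (hne : K.Nonempty) (z : E) :
    ∫ u, suppFun (z +ᵥ K) u ∂σ = ∫ u, suppFun K u ∂σ := by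
  simp only [suppFun_vadd hK hne]
  rw [integral_add (hσ.integrable (by fun_prop)) (hσ.integrable (continuous_suppFun hK hne)),
    hσ.integral_inner, zero_add]

end IsMinkowskiMeasure

/-- A solution of the variational problem behind Minkowski's theorem: `K` has the greatest volume
among the compact sets `N` containing the origin with `∫ h_N ∂σ ≤ 1`. -/
structure IsMaximalBody (σ μ : Measure E) (K : Set E) : Prop where
  isCompact : IsCompact K
  zero_mem : 0 ∈ K
  integral_suppFun_le_one : ∫ u, suppFun K u ∂σ ≤ 1
  measure_le : ∀ N : Set E, IsCompact N → 0 ∈ N → ∫ u, suppFun N u ∂σ ≤ 1 → μ N ≤ μ K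

namespace IsMinkowskiMeasure

variable (μ : Measure E) [μ.IsAddHaarMeasure]

lemma exists_isMaximalBody [Nontrivial E] (hσ : IsMinkowskiMeasure σ) :
    ∃ K, IsMaximalBody σ μ K := by
  obtain ⟨c, hc, hbound⟩ := hσ.exists_pos_forall_mul_norm_le_integral_posPart
  set S : Set (TopologicalSpace.NonemptyCompacts E) :=
    {K | (K : Set E) ⊆ Metric.closedBall 0 (1 / c)} ∩
      ({K | 0 ∈ (K : Set E)} ∩ {K | ∫ u, suppFun (K : Set E) u ∂σ ≤ 1})
  have hS : IsCompact S :=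
    (TopologicalSpace.NonemptyCompacts.isCompact_subsets_of_isCompact
      (isCompact_closedBall (0 : E) (1 / c))).inter_right
      ((isClosed_mem_nonemptyCompacts 0).inter
        (isClosed_le hσ.continuous_integral_suppFun continuous_const))
  have hmem (N : Set E) (hN : IsCompact N) (h0 : 0 ∈ N) (hI : ∫ u, suppFun N u ∂σ ≤ 1) :
      (⟨⟨N, hN⟩, ⟨0, h0⟩⟩ : TopologicalSpace.NonemptyCompacts E) ∈ S :=
    ⟨hσ.subset_closedBall_of_integral_suppFun_le hc hbound hN h0 hI, h0, hI⟩
  have hne : S.Nonempty := ⟨_, hmem {0} isCompact_singleton rfl (by simp [suppFun])⟩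
  obtain ⟨K, ⟨-, hK0, hKI⟩, hmax⟩ := UpperSemicontinuousOn.exists_isMaxOn hne hS
    ((upperSemicontinuous_measure_nonemptyCompacts μ).upperSemicontinuousOn S)
  exact ⟨K, K.isCompact, hK0, hKI, fun N hN h0 hI => hmax (hmem N hN h0 hI)⟩

lemma exists_convex_isMaximalBody [Nontrivial E] (hσ : IsMinkowskiMeasure σ) :
    ∃ K, Convex ℝ K ∧ IsMaximalBody σ μ K := by
  obtain ⟨K, hK, h0, hI, hmax⟩ := hσ.exists_isMaximalBody μ
  have hhull : IsCompact (closure (convexHull ℝ K)) :=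
    (isBounded_convexHull.2 hK.isBounded).isCompact_closure
  have hsub : K ⊆ closure (convexHull ℝ K) := (subset_convexHull ℝ K).trans subset_closure
  have hle : ∫ u, suppFun (closure (convexHull ℝ K)) u ∂σ ≤ ∫ u, suppFun K u ∂σ :=
    hσ.integral_mono (continuous_suppFun hhull ⟨0, hsub h0⟩) (continuous_suppFun hK ⟨0, h0⟩)
      fun u _ => suppFun_closure_convexHull_le hK ⟨0, h0⟩ u
  exact ⟨_, (convex_convexHull ℝ K).closure, hhull, hsub h0, hle.trans hI,
    fun N hN hN0 hNI => (hmax N hN hN0 hNI).trans (measure_mono hsub)⟩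


lemma exists_closedBall_integral_suppFun_le_one (hσ : IsMinkowskiMeasure σ) :
    ∃ r : ℝ, 0 < r ∧ ∫ u, suppFun (Metric.closedBall (0 : E) r) u ∂σ ≤ 1 := by
  have := hσ.isFiniteMeasure
  have hpos : 0 < σ.real univ + 1 := by positivity
  refine ⟨(σ.real univ + 1)⁻¹, inv_pos.2 hpos, ?_⟩
  set r := (σ.real univ + 1)⁻¹
  have hball := isCompact_closedBall (0 : E) r
  have hne : (Metric.closedBall (0 : E) r).Nonempty :=
    Metric.nonempty_closedBall.2 (inv_pos.2 hpos).le
  calc ∫ u, suppFun (Metric.closedBall (0 : E) r) u ∂σ ≤ ∫ _, r ∂σ := by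
        refine hσ.integral_mono (continuous_suppFun hball hne) continuous_const fun u hu =>
          (suppFun_le_iff hball hne).2 fun x hx => ?_
        exact (real_inner_le_norm x u).trans
          (by simpa [mem_sphere_zero_iff_norm.1 hu] using hx)
    _ ≤ 1 := by
        rw [integral_const, smul_eq_mul, ← div_eq_mul_inv, div_le_one hpos]
        exact le_add_of_nonneg_right zero_le_one

/-- The constraint and the volume are both invariant under translation, which brings the origin
to the interior of the maximizer. -/
lemma exists_isCenteredBody_isMaximalBody [Nontrivial E] (hσ : IsMinkowskiMeasure σ) :
    ∃ M, IsCenteredBody M ∧ IsMaximalBody σ μ M := by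
  obtain ⟨K, hconv, hK, h0, hI, hmax⟩ := hσ.exists_convex_isMaximalBody μ
  obtain ⟨r, hr, hball⟩ := hσ.exists_closedBall_integral_suppFun_le_one
  have hpos : 0 < μ K := (Metric.measure_closedBall_pos μ 0 hr).trans_le
    (hmax _ (isCompact_closedBall 0 r) (Metric.mem_closedBall_self hr.le) hball)
  obtain ⟨z, hz⟩ : (interior K).Nonempty := by
    by_contra! hempty
    have hzero := hconv.addHaar_frontier μ
    rw [hK.isClosed.frontier_eq, hempty, sdiff_empty] at hzero
    exact hpos.ne' hzero
  have hM := isCenteredBody_neg_vadd hconv hK hz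
  refine ⟨(-z) +ᵥ K, hM, hM.isCompact, interior_subset hM.zero_mem_interior, ?_,
    fun N hN hN0 hNI => ?_⟩
  · rwa [hσ.integral_suppFun_vadd hK ⟨0, h0⟩]
  · rw [measure_vadd]
    exact hmax N hN hN0 hNI

end IsMinkowskiMeasure

lemma IsMaximalBody.measureReal_le {μ : Measure E} [μ.IsAddHaarMeasure] {M : Set E}
    (hM : IsMaximalBody σ μ M) {N : Set E} (hN : IsCompact N) (h0 : 0 ∈ N) {B : ℝ} (hB : 0 < B)
    (hNB : ∫ u, suppFun N u ∂σ ≤ B) :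
    μ.real N ≤ B ^ Module.finrank ℝ E * μ.real M := by
  have hle : μ.real (B⁻¹ • N) ≤ μ.real M := by
    refine ENNReal.toReal_mono hM.isCompact.measure_lt_top.ne
      (hM.measure_le _ (hN.smul _) ⟨0, h0, smul_zero _⟩ ?_)
    simp only [suppFun_smul_set (inv_nonneg.2 hB.le)]
    rwa [integral_const_mul, inv_mul_le_iff₀ hB, mul_one]
  rwa [measureReal_def, Measure.addHaar_smul_of_nonneg μ (inv_nonneg.2 hB.le), ENNReal.toReal_mul,
    ENNReal.toReal_ofReal (by positivity), inv_pow, inv_mul_le_iff₀ (by positivity)] at hle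

end MinkowskiFunctional

section EulerLagrange

variable {E : Type*} [NormedAddCommGroup E] [InnerProductSpace ℝ E] [FiniteDimensional ℝ E]
  [Nontrivial E] [MeasurableSpace E] [BorelSpace E] {σ : Measure E} {M : Set E} {f : E → ℝ}

lemma IsMinkowskiMeasure.exists_eventually_integral_suppFun_wulffShape_le
    (hσ : IsMinkowskiMeasure σ) (hM : IsCenteredBody M) (hf : Continuous f) :
    ∃ C, ∀ᶠ s in 𝓝 (0 : ℝ), IsCompact (wulffShape M f s) ∧
      ∫ u, suppFun (wulffShape M f s) u ∂σ ≤
        ∫ u, suppFun M u ∂σ + s * ∫ u, f u ∂σ + C * s ^ 2 := by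
  obtain ⟨B, -, hB⟩ := hM.exists_forall_mem_sphere_abs_div_suppFun_le hf
  obtain ⟨δ, hδ, hsmall⟩ := hM.exists_pos_forall_mem_sphere_abs_mul_le hf
  have hh := continuous_suppFun hM.isCompact hM.nonempty
  refine ⟨2 * B ^ 2 * ∫ u, suppFun M u ∂σ, ?_⟩
  filter_upwards [Metric.closedBall_mem_nhds (0 : ℝ) hδ] with s hs
  have hs' := hsmall s (mem_closedBall_zero_iff.1 hs)
  have hK := hM.isCompact_wulffShape hf hs'
  refine ⟨hK, ?_⟩
  have hint : Integrable (fun u => suppFun M u + s * f u) σ := hσ.integrable (by fun_prop)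
  calc ∫ u, suppFun (wulffShape M f s) u ∂σ
      ≤ ∫ u, (suppFun M u + s * f u + 2 * s ^ 2 * B ^ 2 * suppFun M u) ∂σ := by
        refine hσ.integral_mono (continuous_suppFun hK ⟨0, zero_mem_wulffShape M f s⟩)
          (by fun_prop) fun u hu => (hM.suppFun_wulffShape_le hf hu (hs' u hu) hK).trans ?_
        have hsq := sq_le_sq' (abs_le.1 (hB u hu)).1 (abs_le.1 (hB u hu)).2
        have hpos := (hM.suppFun_pos hu).le
        gcongr
    _ = _ := by
        rw [integral_add hint ((hσ.integrable hh).const_mul _),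
          integral_add (hσ.integrable hh) ((hσ.integrable hf).const_mul s), integral_const_mul,
          integral_const_mul]
        ring

lemma IsMaximalBody.setIntegral_gaugeNormal_div {μ : Measure E} [μ.IsAddHaarMeasure]
    (hmax : IsMaximalBody σ μ M) (hσ : IsMinkowskiMeasure σ) (hM : IsCenteredBody M)
    (hf : Continuous f) :
    ∫ x in M, f (gaugeNormal M x) / suppFun M (gaugeNormal M x) ∂μ
      = μ.real M * ∫ u, f u ∂σ := by
  obtain ⟨C, hC⟩ := hσ.exists_eventually_integral_suppFun_wulffShape_le hM hf
  set n := Module.finrank ℝ E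
  set B : ℝ → ℝ := fun s => 1 + s * ∫ u, f u ∂σ + C * s ^ 2 with hBdef
  have hB0 : B 0 = 1 := by simp [hBdef]
  have hBderiv : HasDerivAt B (∫ u, f u ∂σ) 0 := by
    convert! (((hasDerivAt_id (0 : ℝ)).mul_const (∫ u, f u ∂σ)).const_add 1).add
      (((hasDerivAt_id (0 : ℝ)).pow 2).const_mul C) using 1
    simp
  have hBpos : ∀ᶠ s in 𝓝 (0 : ℝ), 0 < B s :=
    hBderiv.continuousAt.eventually (lt_mem_nhds (hB0 ▸ one_pos))
  have hmin : IsLocalMin (fun s => B s ^ n * μ.real M - μ.real (wulffShape M f s)) 0 := by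
    filter_upwards [hC, hBpos] with s ⟨hK, hI⟩ hs
    have hle : μ.real (wulffShape M f s) ≤ B s ^ n * μ.real M :=
      hmax.measureReal_le hK (zero_mem_wulffShape M f s) hs
        (hI.trans (by simp only [hBdef]; gcongr; exact hmax.integral_suppFun_le_one))
    rw [hB0, one_pow, one_mul, hM.wulffShape_zero, sub_self]
    exact sub_nonneg.2 hle
  have hderiv := hmin.hasDerivAt_eq_zero (((hBderiv.pow n).mul_const (μ.real M)).sub
    (hM.hasDerivAt_measureReal_wulffShape hf μ))
  have hn : (n : ℝ) ≠ 0 := Nat.cast_ne_zero.2 Module.finrank_pos.ne'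
  refine mul_left_cancel₀ hn ?_
  rw [hB0, one_pow, mul_one] at hderiv
  linarith

end EulerLagrange

section Similarity

variable {m : ℕ} {K : Set (Euc m)} {l : ℝ} {z : Euc m}

lemma isOutwardNormalAt_similarity (e : Euc m ≃ₜ Euc m) (hl : 0 < l) (he : ∀ x, e x = z + l • x)
    (x n : Euc m) : IsOutwardNormalAt (e '' K) (e x) n ↔ IsOutwardNormalAt K x n := by
  have hinner (y : Euc m) : ⟪e y - e x, n⟫ ≤ 0 ↔ ⟪y - x, n⟫ ≤ 0 := by
    rw [he, he, add_sub_add_left_eq_sub, ← smul_sub, real_inner_smul_left,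
      ← not_lt, mul_pos_iff_of_pos_left hl, not_lt]
  simp only [IsOutwardNormalAt, ← e.image_frontier, e.injective.mem_set_image, forall_mem_image,
    hinner]

lemma gaussMap_similarity (e : Euc m ≃ₜ Euc m) (hl : 0 < l) (he : ∀ x, e x = z + l • x)
    (x : Euc m) : gaussMap (e '' K) (e x) = gaussMap K x := by
  have hnormal : IsOutwardNormalAt (e '' K) (e x) = IsOutwardNormalAt K x :=
    funext fun n => propext (isOutwardNormalAt_similarity e hl he x n)
  rw [gaussMap, gaussMap, hnormal]

lemma hausdorffMeasure_restrict_image_similarity (e : Euc m ≃ₜ Euc m) (hl : 0 < l)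
    (he : ∀ x, e x = z + l • x) {s : ℝ} (hs : 0 ≤ s) (F : Set (Euc m)) :
    (μH[s] : Measure (Euc m)).restrict (e '' F)
      = ENNReal.ofReal (l ^ s) • Measure.map e (μH[s].restrict F) := by
  ext A hA
  have himage (B : Set (Euc m)) : e '' B = z +ᵥ l • B := by
    rw [← image_smul, ← image_vadd, image_image]
    exact image_congr fun x _ => he x
  have hnorm : ENNReal.ofReal (l ^ s) = (‖l‖₊ ^ s : NNReal) := by
    rw [ENNReal.ofReal, ENNReal.coe_inj, Real.toNNReal_rpow_of_nonneg hl.le,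
      Real.toNNReal_eq_nnnorm_of_nonneg hl.le]
  rw [Measure.restrict_apply hA, Measure.smul_apply, Measure.map_apply e.measurable hA,
    Measure.restrict_apply (e.measurable hA), inter_comm, ← image_inter_preimage, inter_comm,
    himage, measure_vadd, Measure.hausdorffMeasure_smul₀ hs hl.ne', hnorm, ENNReal.smul_def]

lemma surfMeasure_vadd_smul (hm : 1 ≤ m) (hl : 0 < l) :
    surfMeasure (z +ᵥ l • K) = ENNReal.ofReal (l ^ ((m : ℝ) - 1)) • surfMeasure K := by
  set e : Euc m ≃ₜ Euc m := (Homeomorph.smulOfNeZero l hl.ne').trans (Homeomorph.addLeft z)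
  have he (x : Euc m) : e x = z + l • x := rfl
  have hK : z +ᵥ l • K = e '' K := by
    rw [← image_smul, ← image_vadd, image_image]
    exact image_congr fun x _ => (he x).symm
  have hs : 0 ≤ (m : ℝ) - 1 := sub_nonneg.2 (by exact_mod_cast hm)
  have hg : gaussMap (e '' K) ∘ e = gaussMap K := funext (gaussMap_similarity e hl he)
  rw [surfMeasure, surfMeasure, hK, ← e.image_frontier,
    hausdorffMeasure_restrict_image_similarity e hl he hs, Measure.map_smul, ← hg]
  congr 1
  by_cases hae : AEMeasurable (gaussMap (e '' K))
      (Measure.map e (μH[(m : ℝ) - 1].restrict (frontier K)))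
  · exact AEMeasurable.map_map_of_aemeasurable hae e.measurable.aemeasurable
  · rw [Measure.map_of_not_aemeasurable hae, Measure.map_of_not_aemeasurable]
    rwa [← e.measurableEmbedding.aemeasurable_map_iff]

lemma surfMeasure_vadd (hm : 1 ≤ m) (z : Euc m) : surfMeasure (z +ᵥ K) = surfMeasure K := by
  simpa using surfMeasure_vadd_smul (K := K) (z := z) hm one_pos

lemma surfMeasure_smul (hm : 1 ≤ m) (hl : 0 < l) :
    surfMeasure (l • K) = ENNReal.ofReal (l ^ ((m : ℝ) - 1)) • surfMeasure K := by
  simpa using surfMeasure_vadd_smul (K := K) (z := 0) hm hl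

lemma surfMeasure_rpow_smul (hm : 2 ≤ m) {a : ℝ} (ha : 0 < a) :
    surfMeasure (a ^ (1 / ((m : ℝ) - 1)) • K) = ENNReal.ofReal a • surfMeasure K := by
  have hm' : (m : ℝ) - 1 ≠ 0 := (sub_pos.2 (Nat.one_lt_cast.2 hm)).ne'
  rw [surfMeasure_smul (by lia) (by positivity), ← Real.rpow_mul ha.le, one_div_mul_cancel hm',
    Real.rpow_one]

end Similarity

section MinkowskiExistence

variable {d : ℕ} {σ : Measure (Euc (d + 1))}

lemma IsMinkowskiMeasure.exists_surfMeasure_eq_smul (hσ : IsMinkowskiMeasure σ) :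
    ∃ M : Set (Euc (d + 1)), IsConvexBody M ∧ ∃ a : ℝ, 0 < a ∧
      surfMeasure M = ENNReal.ofReal a • σ := by
  obtain ⟨M, hM, hmax⟩ := hσ.exists_isCenteredBody_isMaximalBody volume
  set a : ℝ := hausdorffDensity d * (d + 1) * volume.real M
  have hvol : 0 < volume.real M := ENNReal.toReal_pos
    (Measure.measure_pos_of_mem_nhds volume hM.mem_nhds_zero).ne' hM.isCompact.measure_lt_top.ne
  have hdens : (0 : ℝ) < hausdorffDensity d := hausdorffDensity_pos d
  have ha : 0 < a := by positivity
  refine ⟨M, ⟨hM.convex, hM.isCompact, 0, hM.zero_mem_interior⟩, a, ha, ?_⟩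
  have := hM.isMinkowskiMeasure_surfMeasure.isFiniteMeasure
  have := hσ.isFiniteMeasure
  have : IsFiniteMeasure (ENNReal.ofReal a • σ) := σ.smul_finite ENNReal.ofReal_ne_top
  refine ext_of_forall_integral_eq_of_IsFiniteMeasure fun f => ?_
  rw [hM.integral_surfMeasure f.continuous, hmax.setIntegral_gaugeNormal_div hσ hM f.continuous,
    integral_smul_measure, ENNReal.toReal_ofReal ha.le, smul_eq_mul, mul_assoc _ (volume.real M)]

lemma IsMinkowskiMeasure.exists_surfMeasure_eq (hd : 1 ≤ d) (hσ : IsMinkowskiMeasure σ) :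
    ∃ M : Set (Euc (d + 1)), IsConvexBody M ∧ surfMeasure M = σ := by
  obtain ⟨M, ⟨hconv, hcpt, z, hz⟩, a, ha, hMa⟩ := hσ.exists_surfMeasure_eq_smul
  set l : ℝ := a⁻¹ ^ (1 / (((d + 1 : ℕ) : ℝ) - 1))
  have hl : 0 < l := by positivity
  refine ⟨l • M, ⟨hconv.smul l, hcpt.smul l, l • z, ?_⟩, ?_⟩
  · rw [interior_smul₀ hl.ne']
    exact smul_mem_smul_set hz
  · rw [surfMeasure_rpow_smul (by lia) (inv_pos.2 ha), hMa, smul_smul,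
      ← ENNReal.ofReal_mul (by positivity), inv_mul_cancel₀ ha.ne', ENNReal.ofReal_one, one_smul]

lemma IsConvexBody.isMinkowskiMeasure_surfMeasure {K : Set (Euc (d + 1))} (hK : IsConvexBody K) :
    IsMinkowskiMeasure (surfMeasure K) := by
  obtain ⟨hconv, hcpt, z, hz⟩ := hK
  rw [← surfMeasure_vadd (by lia) (-z)]
  exact (isCenteredBody_neg_vadd hconv hcpt hz).isMinkowskiMeasure_surfMeasure

end MinkowskiExistence

section Difference

variable {E : Type*} [NormedAddCommGroup E] [InnerProductSpace ℝ E] [FiniteDimensional ℝ E]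
  [MeasurableSpace E] {μ ν : Measure E}

lemma ofReal_mul_measure_lt_of_le {X : Type*} [MeasurableSpace X] {μ ν : Measure X}
    [IsFiniteMeasure μ] (hle : ν ≤ μ) {t : ℝ} (ht : t < 1) {A : Set X} (hA : μ A ≠ 0) :
    ENNReal.ofReal t * ν A < μ A :=
  calc ENNReal.ofReal t * ν A ≤ ENNReal.ofReal t * μ A := by gcongr
    _ < 1 * μ A :=
        (ENNReal.mul_lt_mul_iff_left hA (measure_ne_top μ A)).2 (ENNReal.ofReal_lt_one.2 ht)
    _ = μ A := one_mul _

namespace IsMinkowskiMeasure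

lemma measure_sphere_diff_ker_ne_zero (hμ : IsMinkowskiMeasure μ) {f : E →ₗ[ℝ] ℝ}
    (hf : f ≠ 0) : μ (Metric.sphere 0 1 \ {x | f x = 0}) ≠ 0 := by
  set v : E := (InnerProductSpace.toDual ℝ E).symm f.toContinuousLinearMap
  have hfv (u : E) : ⟪v, u⟫ = f u := InnerProductSpace.toDual_symm_apply
  have hv : v ≠ 0 := fun hv => hf (LinearMap.ext fun u => by
    rw [← hfv, hv, inner_zero_left, LinearMap.zero_apply])
  refine fun hzero => hμ.halfSpace_ne_zero v hv (measure_eq_zero_iff_ae_notMem.2 ?_)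
  filter_upwards [measure_eq_zero_iff_ae_notMem.1 hzero, hμ.ae_mem_sphere] with u hu hsphere hpos
  exact hu ⟨hsphere, ((hfv u).symm.trans_gt hpos).ne'⟩

lemma exists_add_smul_eq [BorelSpace E] (hμ : IsMinkowskiMeasure μ)
    (hν : IsMinkowskiMeasure ν) (hle : ν ≤ μ) {t : ℝ} (ht : t < 1) :
    ∃ σ : Measure E, IsMinkowskiMeasure σ ∧ σ + ENNReal.ofReal t • ν = μ := by
  have := hμ.isFiniteMeasure
  have := hν.isFiniteMeasure
  have : IsFiniteMeasure (ENNReal.ofReal t • ν) := ν.smul_finite ENNReal.ofReal_ne_top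
  have hle' : ENNReal.ofReal t • ν ≤ μ := by
    refine (Measure.le_iff.2 fun A _ => ?_).trans hle
    rw [Measure.smul_apply, smul_eq_mul]
    exact mul_le_of_le_one_left' (ENNReal.ofReal_le_one.2 ht.le)
  set σ := μ - ENNReal.ofReal t • ν
  have hadd : σ + ENNReal.ofReal t • ν = μ := Measure.sub_add_cancel_of_le hle'
  have hfin : IsFiniteMeasure σ := isFiniteMeasure_of_le μ Measure.sub_le
  have hsphere : ∀ᵐ u ∂σ, u ∈ Metric.sphere (0 : E) 1 :=
    Measure.absolutelyContinuous_of_le Measure.sub_le hμ.ae_mem_sphere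
  refine ⟨σ, ⟨hfin, hsphere, ?_, fun v hv hzero => ?_⟩, hadd⟩
  · have hid := hμ.integral_id
    rwa [← hadd, integral_add_measure (integrable_of_ae_mem_sphere hsphere continuous_id')
      ((hν.integrable continuous_id').smul_measure ENNReal.ofReal_ne_top), integral_smul_measure,
      hν.integral_id, smul_zero, add_zero] at hid
  · refine (ofReal_mul_measure_lt_of_le hle ht (hμ.halfSpace_ne_zero v hv)).ne ?_
    conv_rhs => rw [← hadd, Measure.add_apply, hzero, zero_add, Measure.smul_apply, smul_eq_mul]

end IsMinkowskiMeasure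

end Difference

/-- the decomposition step: if `S(K,·) ≤ S(L,·)` and `0 < t < 1`, then
`μ = S(L,·) - t·S(K,·)` is a nonnegative measure with zero barycenter not
concentrated on any great subsphere, so by Minkowski's theorem there is a convex
body `M` with `S(M,·) = μ`, and `L = M # (t^{1/(m-1)} K)` (as Blaschke sum, i.e. on
the level of surface area measures). -/
theorem surf_measure_decomposition {m : ℕ} (hm : 2 ≤ m)
    (K L : Set (Euc m)) (hK : IsConvexBody K) (hL : IsConvexBody L)
    (t : ℝ) (ht0 : 0 < t) (ht1 : t < 1)
    (hdom : ∀ U : Set (Euc m), MeasurableSet U → surfMeasure K U ≤ surfMeasure L U) :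
    -- `μ = S(L,·) - t S(K,·)` is nonnegative
    (∀ U : Set (Euc m), MeasurableSet U →
      ENNReal.ofReal t * surfMeasure K U ≤ surfMeasure L U) ∧
    -- `μ` has zero barycenter
    (∫ x, x ∂(surfMeasure L) = t • ∫ x, x ∂(surfMeasure K)) ∧
    -- `μ` is not concentrated on any great subsphere
    (∀ f : Euc m →ₗ[ℝ] ℝ, f ≠ 0 →
      ENNReal.ofReal t * surfMeasure K (unitSphere m \ {x | f x = 0}) <
        surfMeasure L (unitSphere m \ {x | f x = 0})) ∧
    -- the convex body `M` with `S(M,·) = μ`, and `L = M # (t^{1/(m-1)} K)`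
    (∃ M : Set (Euc m), IsConvexBody M ∧
      (∀ U : Set (Euc m), MeasurableSet U →
        surfMeasure M U + ENNReal.ofReal t * surfMeasure K U = surfMeasure L U) ∧
      (∀ U : Set (Euc m), MeasurableSet U →
        surfMeasure M U + surfMeasure ((t ^ (1 / ((m:ℝ) - 1))) • K) U
          = surfMeasure L U)) := by
  obtain ⟨d, rfl⟩ : ∃ d, m = d + 1 := ⟨m - 1, by lia⟩
  have hμ := hL.isMinkowskiMeasure_surfMeasure
  have hν := hK.isMinkowskiMeasure_surfMeasure
  have hle : surfMeasure K ≤ surfMeasure L := Measure.le_iff.2 hdom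
  have := hμ.isFiniteMeasure
  obtain ⟨σ, hσ, hadd⟩ := hμ.exists_add_smul_eq hν hle ht1
  obtain ⟨M, hM, rfl⟩ := hσ.exists_surfMeasure_eq (by lia)
  have hsum (U : Set (Euc (d + 1))) :
      surfMeasure M U + ENNReal.ofReal t * surfMeasure K U = surfMeasure L U := by
    rw [← hadd, Measure.add_apply, Measure.smul_apply, smul_eq_mul]
  refine ⟨fun U _ => (hsum U).le.trans' le_add_self, ?_, fun f hf =>
    ofReal_mul_measure_lt_of_le hle ht1 (hμ.measure_sphere_diff_ker_ne_zero hf),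
    M, hM, fun U _ => hsum U, fun U _ => ?_⟩
  · rw [hμ.integral_id, hν.integral_id, smul_zero]
  · rw [surfMeasure_rpow_smul hm ht0, Measure.smul_apply, smul_eq_mul, hsum]
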